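/- arXiv:1711.06455 — 3 statements merged into one kernel-verified Lean document; each statement's English description precedes it below -/
import Mathlib

section
/- (Deleting very high resistance edges barely changes effective resistance) Let I be a connected weighted graph with m edges, e an edge of I, and ρ > m. Let I' be the subgraph of I consisting of all edges of resistance at most ρ r_e. Then I' is connected (it contains e) on the component of e, and Reff_I(e) ≤ Reff_{I'}(e) ≤ (1 / (1 - m/ρ)^2) * Reff_I(e). In particular, for ρ = (m/ε)^{10} one gets Reff_{I'}(e) ≤ (1 + 2ε/m^9) Reff_I(e) when ε ∈ (0,1) and m ≥ 2. -/
open Matrix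

/-- The signed indicator vector `χ_x - χ_y`. -/
def incv {V : Type*} [DecidableEq V] (x y : V) : V → ℝ := fun v =>
  (if v = x then 1 else 0) - (if v = y then 1 else 0)

/-- Weighted Laplacian of the multigraph whose edge `e` has endpoints `a e`, `b e`
and conductance `c e`. -/
noncomputable def lapM {V E : Type*} [DecidableEq V] [Fintype E]
    (a b : E → V) (c : E → ℝ) : Matrix V V ℝ :=
  ∑ e, c e • Matrix.vecMulVec (incv (a e) (b e)) (incv (a e) (b e))

/-- `M` is the Moore–Penrose pseudoinverse of `L`. -/
def IsMPInv {V : Type*} [Fintype V] (L M : Matrix V V ℝ) : Prop :=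
  L * M * L = L ∧ M * L * M = M ∧ (L * M)ᵀ = L * M ∧ (M * L)ᵀ = M * L

/-- Connectivity of a weighted graph, encoded as: the kernel of its Laplacian
consists exactly of the constant vectors. -/
def LapConnected {V : Type*} [Fintype V] (L : Matrix V V ℝ) : Prop :=
  ∀ x : V → ℝ, L.mulVec x = 0 → ∃ t : ℝ, ∀ v, x v = t

section Laplacian

variable {V E : Type*} [Fintype V] [DecidableEq V] [Fintype E]

lemma incv_dotProduct (x y : V) (u : V → ℝ) : incv x y ⬝ᵥ u = u x - u y := by
  simp [incv, dotProduct, sub_mul, Finset.sum_sub_distrib]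

lemma lapM_mulVec (a b : E → V) (c : E → ℝ) (y : V → ℝ) :
    lapM a b c *ᵥ y = ∑ f, (c f * (y (a f) - y (b f))) • incv (a f) (b f) := by
  simp only [lapM, Matrix.sum_mulVec, Matrix.smul_mulVec, Matrix.vecMulVec_mulVec,
    incv_dotProduct]
  refine Finset.sum_congr rfl fun f _ => ?_
  ext v
  simp
  ring

/-- The bilinear Dirichlet form of a weighted graph as a sum over its edges. -/
lemma dotProduct_lapM_mulVec (a b : E → V) (c : E → ℝ) (x y : V → ℝ) :
    x ⬝ᵥ lapM a b c *ᵥ y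
      = ∑ f, c f * ((x (a f) - x (b f)) * (y (a f) - y (b f))) := by
  rw [lapM_mulVec, dotProduct_sum]
  refine Finset.sum_congr rfl fun f _ => ?_
  rw [dotProduct_smul, dotProduct_comm, incv_dotProduct, smul_eq_mul]
  ring

omit [Fintype V] in
lemma lapM_transpose (a b : E → V) (c : E → ℝ) : (lapM a b c)ᵀ = lapM a b c := by
  simp [lapM, Matrix.transpose_sum, Matrix.transpose_vecMulVec]

lemma mul_sub_eq_zero_of_energy_eq_zero {a b : E → V} {c : E → ℝ} (hc : ∀ f, 0 ≤ c f)
    {z : V → ℝ} (hz : z ⬝ᵥ lapM a b c *ᵥ z = 0) (f : E) :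
    c f * (z (a f) - z (b f)) = 0 := by
  rw [dotProduct_lapM_mulVec, Finset.sum_eq_zero_iff_of_nonneg
    fun g _ => mul_nonneg (hc g) (mul_self_nonneg _)] at hz
  simpa using hz f (Finset.mem_univ f)

lemma energy_nonneg {a b : E → V} {c : E → ℝ} (hc : ∀ f, 0 ≤ c f) (z : V → ℝ) :
    0 ≤ z ⬝ᵥ lapM a b c *ᵥ z := by
  rw [dotProduct_lapM_mulVec]
  exact Finset.sum_nonneg fun g _ => mul_nonneg (hc g) (mul_self_nonneg _)

/-- The pseudoinverse of the Laplacian solves the Poisson equation for the dipole along any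
edge of positive conductance. -/
lemma lapM_mulVec_pinv_incv {a b : E → V} {c : E → ℝ} (hc : ∀ f, 0 ≤ c f) {e : E}
    (he : 0 < c e) {M : Matrix V V ℝ} (hM : IsMPInv (lapM a b c) M) :
    lapM a b c *ᵥ (M *ᵥ incv (a e) (b e)) = incv (a e) (b e) := by
  obtain ⟨h1, -, h3, -⟩ := hM
  set L := lapM a b c with hL
  have hT : Lᵀ = L := lapM_transpose a b c
  have hLP : L * (L * M) = L := by
    have := congrArg Matrix.transpose h1
    rwa [Matrix.transpose_mul, h3, hT] at this
  set d := incv (a e) (b e) with hd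
  set z := d - (L * M) *ᵥ d with hz
  have hLz : L *ᵥ z = 0 := by
    rw [hz, Matrix.mulVec_sub, Matrix.mulVec_mulVec, hLP, sub_self]
  have hez : d ⬝ᵥ z = 0 := by
    rw [hd, incv_dotProduct]
    have := mul_sub_eq_zero_of_energy_eq_zero hc (z := z)
      (by rw [← hL, hLz, dotProduct_zero]) e
    exact (mul_eq_zero.mp this).resolve_left he.ne'
  have hPz : (L * M) *ᵥ d ⬝ᵥ z = 0 := by
    rw [dotProduct_comm, Matrix.dotProduct_mulVec, ← Matrix.mulVec_transpose,
      Matrix.transpose_mul, hT, ← Matrix.mulVec_mulVec, hLz, Matrix.mulVec_zero,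
      zero_dotProduct]
  have hzz : z ⬝ᵥ z = 0 := by
    nth_rewrite 1 [hz]
    rw [sub_dotProduct, hez, hPz, sub_zero]
  have := dotProduct_self_eq_zero.mp hzz
  rw [Matrix.mulVec_mulVec]
  exact (sub_eq_zero.mp this).symm

lemma sq_clamp_sub_clamp_le {s t : ℝ} (x y : ℝ) :
    (max s (min t x) - max s (min t y)) * (max s (min t x) - max s (min t y))
      ≤ (x - y) * (x - y) := by
  rw [← abs_mul_abs_self (x - y), ← abs_mul_abs_self (max s (min t x) - max s (min t y))]
  have h : |max s (min t x) - max s (min t y)| ≤ |x - y| := by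
    refine (abs_max_sub_max_le_max _ _ _ _).trans ?_
    rw [sub_self, abs_zero, max_eq_right (abs_nonneg _)]
    refine (abs_min_sub_min_le_max _ _ _ _).trans ?_
    rw [sub_self, abs_zero, max_eq_right (abs_nonneg _)]
  exact mul_self_le_mul_self (abs_nonneg _) h

/-- Maximum principle: an electrical potential of a unit flow from `x` to `y` may be chosen
to take values between those at its poles. -/
lemma exists_potential_osc_le {a b : E → V} {c : E → ℝ} (hc : ∀ f, 0 ≤ c f) {x y : V}
    {φ : V → ℝ} (hφ : lapM a b c *ᵥ φ = incv x y) :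
    ∃ ψ : V → ℝ, lapM a b c *ᵥ ψ = incv x y ∧ ψ x - ψ y = φ x - φ y ∧
      ∀ u v, |ψ u - ψ v| ≤ φ x - φ y := by
  have hE : φ ⬝ᵥ lapM a b c *ᵥ φ = φ x - φ y := by
    rw [hφ, dotProduct_comm, incv_dotProduct]
  have hle : φ y ≤ φ x := sub_nonneg.mp (hE ▸ energy_nonneg hc φ)
  set ψ : V → ℝ := fun v => max (φ y) (min (φ x) (φ v)) with hψ
  have hx : ψ x = φ x := by simp [hψ, hle]
  have hy : ψ y = φ y := by simp [hψ]
  have hlo : ∀ v, φ y ≤ ψ v := fun v => le_max_left _ _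
  have hhi : ∀ v, ψ v ≤ φ x := fun v => max_le hle (min_le_left _ _)
  have hψE : ψ ⬝ᵥ lapM a b c *ᵥ ψ ≤ φ x - φ y := by
    rw [← hE, dotProduct_lapM_mulVec, dotProduct_lapM_mulVec]
    exact Finset.sum_le_sum fun f _ =>
      mul_le_mul_of_nonneg_left (sq_clamp_sub_clamp_le _ _) (hc f)
  have hcross : ψ ⬝ᵥ lapM a b c *ᵥ φ = φ x - φ y := by
    rw [hφ, dotProduct_comm, incv_dotProduct, hx, hy]
  have hcross' : φ ⬝ᵥ lapM a b c *ᵥ ψ = φ x - φ y := by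
    rw [← hcross, dotProduct_lapM_mulVec, dotProduct_lapM_mulVec]
    exact Finset.sum_congr rfl fun f _ => by ring
  have hz : (ψ - φ) ⬝ᵥ lapM a b c *ᵥ (ψ - φ) = 0 := by
    refine le_antisymm ?_ (energy_nonneg hc _)
    rw [Matrix.mulVec_sub, sub_dotProduct, dotProduct_sub, dotProduct_sub]
    linarith
  refine ⟨ψ, ?_, by rw [hx, hy], fun u v => ?_⟩
  · rw [← hφ, lapM_mulVec, lapM_mulVec]
    refine Finset.sum_congr rfl fun f _ => ?_
    have := mul_sub_eq_zero_of_energy_eq_zero hc hz f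
    simp only [Pi.sub_apply] at this
    congr 1
    linarith
  · rw [abs_le]
    constructor <;> linarith [hlo u, hlo v, hhi u, hhi v]

/-- Rayleigh monotonicity. -/
lemma reff_anti {a b : E → V} {c c' : E → ℝ} (hc' : ∀ f, 0 ≤ c' f) (hcc : ∀ f, c' f ≤ c f)
    {x y : V} {φ φ' : V → ℝ} (hφ : lapM a b c *ᵥ φ = incv x y)
    (hφ' : lapM a b c' *ᵥ φ' = incv x y) : φ x - φ y ≤ φ' x - φ' y := by
  have hE : φ ⬝ᵥ lapM a b c' *ᵥ φ ≤ φ x - φ y := by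
    rw [← incv_dotProduct x y φ, ← hφ, dotProduct_comm _ φ, dotProduct_lapM_mulVec,
      dotProduct_lapM_mulVec]
    exact Finset.sum_le_sum fun f _ => mul_le_mul_of_nonneg_right (hcc f) (mul_self_nonneg _)
  have h1 : φ ⬝ᵥ lapM a b c' *ᵥ φ' = φ x - φ y := by
    rw [hφ', dotProduct_comm, incv_dotProduct]
  have h2 : φ' ⬝ᵥ lapM a b c' *ᵥ φ = φ x - φ y := by
    rw [← h1, dotProduct_lapM_mulVec, dotProduct_lapM_mulVec]
    exact Finset.sum_congr rfl fun f _ => by ring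
  have h3 : φ' ⬝ᵥ lapM a b c' *ᵥ φ' = φ' x - φ' y := by
    rw [hφ', dotProduct_comm, incv_dotProduct]
  have h4 := energy_nonneg (a := a) (b := b) hc' (φ - φ')
  rw [Matrix.mulVec_sub, sub_dotProduct, dotProduct_sub, dotProduct_sub] at h4
  linarith

/-- The effective resistance across an edge is at most its resistance. -/
lemma conductance_mul_reff_le_one {a b : E → V} {c : E → ℝ} (hc : ∀ f, 0 ≤ c f) (e : E)
    {φ : V → ℝ} (hφ : lapM a b c *ᵥ φ = incv (a e) (b e)) :
    c e * (φ (a e) - φ (b e)) ≤ 1 := by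
  have hE : φ ⬝ᵥ lapM a b c *ᵥ φ = φ (a e) - φ (b e) := by
    rw [hφ, dotProduct_comm, incv_dotProduct]
  have h0 := hE ▸ energy_nonneg hc φ
  have h1 : c e * ((φ (a e) - φ (b e)) * (φ (a e) - φ (b e))) ≤ φ (a e) - φ (b e) := by
    conv_rhs => rw [← hE, dotProduct_lapM_mulVec]
    exact Finset.single_le_sum
      (f := fun f => c f * ((φ (a f) - φ (b f)) * (φ (a f) - φ (b f))))
      (fun f _ => mul_nonneg (hc f) (mul_self_nonneg _)) (Finset.mem_univ e)
  rcases h0.eq_or_lt with h | h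
  · rw [← h, mul_zero]; exact zero_le_one
  · rw [← mul_assoc] at h1
    exact le_of_mul_le_mul_right (by linarith) h

/-- Decreasing each conductance by at most `δ` changes the effective resistance `R` between
two vertices to some `R'` with `R' ≤ R + m δ R R'`. -/
lemma reff_le_add_of_conductance_sub_le {a b : E → V} {c c' : E → ℝ} {δ : ℝ}
    (hc : ∀ f, 0 ≤ c f) (hc' : ∀ f, 0 ≤ c' f) (hcc : ∀ f, c' f ≤ c f)
    (hδ : ∀ f, c f - c' f ≤ δ) {x y : V} {φ φ' : V → ℝ}
    (hφ : lapM a b c *ᵥ φ = incv x y) (hφ' : lapM a b c' *ᵥ φ' = incv x y) :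
    φ' x - φ' y ≤ (φ x - φ y)
      + Fintype.card E * (δ * ((φ x - φ y) * (φ' x - φ' y))) := by
  obtain ⟨ψ, hψ, hψR, hψo⟩ := exists_potential_osc_le hc hφ
  obtain ⟨ψ', hψ', hψR', hψo'⟩ := exists_potential_osc_le hc' hφ'
  rw [← hψR, ← hψR'] at *
  have h1 : ψ' ⬝ᵥ lapM a b c *ᵥ ψ = ψ' x - ψ' y := by
    rw [hψ, dotProduct_comm, incv_dotProduct]
  have h2 : ψ ⬝ᵥ lapM a b c' *ᵥ ψ' = ψ x - ψ y := by
    rw [hψ', dotProduct_comm, incv_dotProduct]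
  rw [dotProduct_lapM_mulVec] at h1 h2
  have h3 : ∑ f, (c f - c' f) * ((ψ (a f) - ψ (b f)) * (ψ' (a f) - ψ' (b f)))
      = (ψ' x - ψ' y) - (ψ x - ψ y) := by
    rw [← h1, ← h2, ← Finset.sum_sub_distrib]
    exact Finset.sum_congr rfl fun f _ => by ring
  have h4 : ∑ f, (c f - c' f) * ((ψ (a f) - ψ (b f)) * (ψ' (a f) - ψ' (b f)))
      ≤ ∑ _f : E, δ * ((ψ x - ψ y) * (ψ' x - ψ' y)) := by
    refine Finset.sum_le_sum fun f _ => ?_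
    have hR : 0 ≤ ψ x - ψ y := (abs_nonneg _).trans (hψo x x)
    have hR' : 0 ≤ ψ' x - ψ' y := (abs_nonneg _).trans (hψo' x x)
    calc (c f - c' f) * ((ψ (a f) - ψ (b f)) * (ψ' (a f) - ψ' (b f)))
        ≤ (c f - c' f) * ((ψ x - ψ y) * (ψ' x - ψ' y)) := by
          refine mul_le_mul_of_nonneg_left ?_ (sub_nonneg.mpr (hcc f))
          refine (le_abs_self _).trans ?_
          rw [abs_mul]
          exact mul_le_mul (hψo _ _) (hψo' _ _) (abs_nonneg _) hR
      _ ≤ δ * ((ψ x - ψ y) * (ψ' x - ψ' y)) :=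
          mul_le_mul_of_nonneg_right (hδ f) (mul_nonneg hR hR')
  rw [h3, Finset.sum_const, Finset.card_univ, nsmul_eq_mul] at h4
  linarith

end Laplacian

/-- **Deleting very high resistance edges barely changes effective
resistance.**  If `I'` keeps only the edges of resistance at most `ρ r_e`
(`ρ > m`), then `e` survives and
`Reff_I e ≤ Reff_{I'} e ≤ (1/(1-m/ρ))² Reff_I e`; in particular for
`ρ = (m/ε)^10` one gets the factor `1 + 2ε/m⁹`. -/
theorem reff_after_deleting_high_resistance_edges
    {V E : Type*} [Fintype V] [DecidableEq V] [Fintype E] [DecidableEq E]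
    (a b : E → V) (r : E → ℝ) (hr : ∀ f, 0 < r f)
    (hconn : LapConnected (lapM a b fun f => (r f)⁻¹))
    (e : E) (ρ : ℝ) (hρ : (Fintype.card E : ℝ) < ρ)
    (Lp Lp' : Matrix V V ℝ)
    (hLp : IsMPInv (lapM a b fun f => (r f)⁻¹) Lp)
    (hLp' : IsMPInv (lapM a b fun f => if r f ≤ ρ * r e then (r f)⁻¹ else 0) Lp') :
    r e ≤ ρ * r e
    ∧ incv (a e) (b e) ⬝ᵥ Lp.mulVec (incv (a e) (b e))
        ≤ incv (a e) (b e) ⬝ᵥ Lp'.mulVec (incv (a e) (b e))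
    ∧ incv (a e) (b e) ⬝ᵥ Lp'.mulVec (incv (a e) (b e))
        ≤ (1 / (1 - (Fintype.card E : ℝ) / ρ))^2
            * (incv (a e) (b e) ⬝ᵥ Lp.mulVec (incv (a e) (b e)))
    ∧ (∀ ε : ℝ, 0 < ε → ε < 1 → 2 ≤ Fintype.card E →
        ρ = ((Fintype.card E : ℝ) / ε)^10 →
        incv (a e) (b e) ⬝ᵥ Lp'.mulVec (incv (a e) (b e))
          ≤ (1 + 2 * ε / (Fintype.card E : ℝ)^9)
              * (incv (a e) (b e) ⬝ᵥ Lp.mulVec (incv (a e) (b e)))) := by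
  have hm : (1 : ℝ) ≤ Fintype.card E := by
    exact_mod_cast Fintype.card_pos_iff.mpr ⟨e⟩
  have hρ0 : 0 < ρ := by linarith
  have hre : r e ≤ ρ * r e := le_mul_of_one_le_left (hr e).le (by linarith)
  have hc : ∀ f, 0 ≤ (r f)⁻¹ := fun f => (inv_pos.mpr (hr f)).le
  have hc' : ∀ f, 0 ≤ if r f ≤ ρ * r e then (r f)⁻¹ else 0 := fun f => by
    split_ifs
    exacts [hc f, le_rfl]
  have hcc : ∀ f, (if r f ≤ ρ * r e then (r f)⁻¹ else 0) ≤ (r f)⁻¹ := fun f => by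
    split_ifs
    exacts [le_rfl, hc f]
  have hδ : ∀ f, (r f)⁻¹ - (if r f ≤ ρ * r e then (r f)⁻¹ else 0) ≤ (ρ * r e)⁻¹ :=
    fun f => by
      have hpos : 0 < ρ * r e := mul_pos hρ0 (hr e)
      split_ifs with h
      · rw [sub_self]; exact (inv_pos.mpr hpos).le
      · rw [sub_zero]; exact inv_anti₀ hpos (not_le.mp h).le
  have hφ := lapM_mulVec_pinv_incv hc (inv_pos.mpr (hr e)) hLp
  have hφ' := lapM_mulVec_pinv_incv hc' (e := e)
    (by rw [if_pos hre]; exact inv_pos.mpr (hr e)) hLp'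
  have hmono := reff_anti hc' hcc hφ hφ'
  have hupper := reff_le_add_of_conductance_sub_le hc hc' hcc hδ hφ hφ'
  have hone := conductance_mul_reff_le_one hc e hφ
  have hR := energy_nonneg (a := a) (b := b) hc (Lp *ᵥ incv (a e) (b e))
  rw [hφ, dotProduct_comm] at hR
  simp only [← incv_dotProduct] at hmono hupper hone
  set R := incv (a e) (b e) ⬝ᵥ Lp *ᵥ incv (a e) (b e)
  set R' := incv (a e) (b e) ⬝ᵥ Lp' *ᵥ incv (a e) (b e)
  have hδ1 : (Fintype.card E : ℝ) / ρ < 1 := (div_lt_one hρ0).mpr hρ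
  have hkey : (1 - (Fintype.card E : ℝ) / ρ) * R' ≤ R := by
    have h1 : (Fintype.card E : ℝ) * ((ρ * r e)⁻¹ * (R * R'))
        = ((Fintype.card E : ℝ) / ρ * R') * ((r e)⁻¹ * R) := by
      rw [mul_inv]; ring
    have h2 : ((Fintype.card E : ℝ) / ρ * R') * ((r e)⁻¹ * R)
        ≤ (Fintype.card E : ℝ) / ρ * R' :=
      mul_le_of_le_one_right (mul_nonneg (by positivity) (hR.trans hmono)) hone
    linarith
  refine ⟨hre, hmono, ?_, fun ε hε hε1 hm2 hρε => ?_⟩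
  · have hs0 : 0 < 1 - (Fintype.card E : ℝ) / ρ := by linarith
    have hs1 : 1 - (Fintype.card E : ℝ) / ρ ≤ 1 := by
      have : 0 ≤ (Fintype.card E : ℝ) / ρ := by positivity
      linarith
    rw [div_pow, one_pow, one_div, inv_mul_eq_div, le_div_iff₀ (by positivity)]
    calc R' * (1 - (Fintype.card E : ℝ) / ρ) ^ 2
        = (1 - (Fintype.card E : ℝ) / ρ) * ((1 - (Fintype.card E : ℝ) / ρ) * R') := by ring
      _ ≤ (1 - (Fintype.card E : ℝ) / ρ) * R := mul_le_mul_of_nonneg_left hkey hs0.le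
      _ ≤ R := mul_le_of_le_one_left hR hs1
  · have hm2' : (2 : ℝ) ≤ Fintype.card E := by exact_mod_cast hm2
    have hdelta : (Fintype.card E : ℝ) / ρ ≤ ε / (Fintype.card E : ℝ) ^ 9 := by
      have h : (Fintype.card E : ℝ) / ρ = ε ^ 10 / (Fintype.card E : ℝ) ^ 9 := by
        rw [hρε]
        field_simp
      rw [h]
      gcongr
      exact pow_le_of_le_one hε.le hε1.le (by norm_num)
    set t := ε / (Fintype.card E : ℝ) ^ 9 with ht
    have ht0 : 0 < t := by positivity
    have ht2 : t ≤ 1 / 2 := by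
      rw [ht, div_le_iff₀ (by positivity)]
      have : (2 : ℝ) ^ 9 ≤ (Fintype.card E : ℝ) ^ 9 := by gcongr
      linarith
    have h1 : (1 - t) * R' ≤ R :=
      (mul_le_mul_of_nonneg_right (by linarith) (hR.trans hmono)).trans hkey
    rw [mul_div_assoc]
    calc R' ≤ (1 + 2 * t) * ((1 - t) * R') := by
          have : 0 ≤ t * (1 - 2 * t) * R' :=
            mul_nonneg (mul_nonneg ht0.le (by linarith)) (hR.trans hmono)
          linarith
      _ ≤ (1 + 2 * t) * R := mul_le_mul_of_nonneg_left h1 (by linarith)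
end

section
/- (Subset spectral sparsification) Let G be a weighted graph with n vertices, F ⊆ E(G), and ε ∈ (0,1). Then there exists a weighted graph H on the same vertex set such that: (i) every edge of G outside F appears in H with unchanged weight; (ii) the number of edges of F that appear (reweighted) in H is at most (8 log n / ε^2)(1 + sum_{e ∈ F} lev_G(e)); and (iii) (1-ε) L_G ⪯ L_H ⪯ (1+ε) L_G in the Loewner order, hence (1-ε) d^T L_G^+ d ≤ d^T L_H^+ d ≤ (1+ε) d^T L_G^+ d for every d orthogonal to the all-ones vector (up to replacing 1±ε by 1/(1∓ε)). -/
open Matrix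

section Trace

variable {V : Type*} [Fintype V]

lemma trace_mul_self_le (Z : Matrix V V ℝ) : (Z * Z).trace ≤ (Zᴴ * Z).trace := by
  have h := (posSemidef_conjTranspose_mul_self (Z - Zᴴ)).trace_nonneg
  have e : (Z - Zᴴ)ᴴ * (Z - Zᴴ) = Zᴴ * Z - (Z * Z)ᴴ - Z * Z + Z * Zᴴ := by
    simp only [conjTranspose_sub, conjTranspose_conjTranspose, conjTranspose_mul]
    noncomm_ring
  rw [e, trace_add, trace_sub, trace_sub, trace_conjTranspose, trace_mul_comm Z Zᴴ,
    star_trivial] at h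
  linarith

lemma two_mul_trace_mul_le {P Q : Matrix V V ℝ} (hP : P.IsHermitian) (hQ : Q.IsHermitian) :
    2 * (P * Q).trace ≤ (P * P).trace + (Q * Q).trace := by
  have h := (posSemidef_conjTranspose_mul_self (P - Q)).trace_nonneg
  have e : (P - Q)ᴴ * (P - Q) = P * P - P * Q - Q * P + Q * Q := by
    rw [conjTranspose_sub, hP.eq, hQ.eq]
    noncomm_ring
  rw [e, trace_add, trace_sub, trace_sub, trace_mul_comm Q P] at h
  linarith

variable [DecidableEq V]

lemma trace_mul_pow_comm (X Y : Matrix V V ℝ) (n : ℕ) :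
    ((X * Y) ^ n).trace = ((Y * X) ^ n).trace := by
  cases n with
  | zero => simp
  | succ n =>
    have h : (X * Y) ^ (n + 1) = X * ((Y * X) ^ n * Y) := by
      induction n with
      | zero => simp
      | succ n ih => rw [pow_succ', ih, pow_succ' (Y * X) n]; simp only [Matrix.mul_assoc]
    rw [h, trace_mul_comm, Matrix.mul_assoc, ← pow_succ]

lemma trace_pow_two_pow_le (k : ℕ) :
    (∀ Z : Matrix V V ℝ, (Z ^ 2 ^ (k + 1)).trace ≤ ((Zᴴ * Z) ^ 2 ^ k).trace) ∧
    ∀ P Q : Matrix V V ℝ, P.IsHermitian → Q.IsHermitian →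
      ((P * Q) ^ 2 ^ k).trace ≤ (P ^ 2 ^ k * Q ^ 2 ^ k).trace := by
  induction k with
  | zero =>
    refine ⟨fun Z => ?_, fun P Q _ _ => by simp⟩
    simpa [pow_two] using trace_mul_self_le Z
  | succ k ih =>
    obtain ⟨hZ, hPQ⟩ := ih
    refine ⟨fun Z => ?_, fun P Q hP hQ => ?_⟩
    · have h1 := hZ (Z * Z)
      have h2 : ((Z * Z)ᴴ * (Z * Z)) = Zᴴ * (Zᴴ * Z * Z) := by
        simp only [conjTranspose_mul, Matrix.mul_assoc]
      have hP := isHermitian_conjTranspose_mul_self Z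
      have hQ := isHermitian_mul_conjTranspose_self Z
      have h3 := hPQ (Zᴴ * Z) (Z * Zᴴ) hP hQ
      have h4 := two_mul_trace_mul_le (hP.pow (2 ^ k)) (hQ.pow (2 ^ k))
      rw [h2, trace_mul_pow_comm Zᴴ, Matrix.mul_assoc (Zᴴ * Z) Z Zᴴ] at h1
      rw [← pow_add, ← pow_add, ← two_mul, ← pow_succ', trace_mul_pow_comm Z] at h4
      rw [← pow_two Z, ← pow_mul, ← pow_succ'] at h1
      linarith
    · have h1 := hZ (P * Q)
      have h2 : (P * Q)ᴴ * (P * Q) = Q * (P * P * Q) := by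
        rw [conjTranspose_mul, hP.eq, hQ.eq]; simp only [Matrix.mul_assoc]
      have h3 := hPQ (P ^ 2) (Q ^ 2) (hP.pow 2) (hQ.pow 2)
      rw [h2, trace_mul_pow_comm Q, Matrix.mul_assoc (P * P), ← pow_two, ← pow_two] at h1
      rw [← pow_mul, ← pow_mul, ← pow_succ'] at h3
      exact h1.trans h3

end Trace

section Trotter

open Filter Topology

variable {𝔸 : Type*} [NormedRing 𝔸]

lemma norm_pow_sub_pow_le {x y : 𝔸} {M : ℝ} (hM : 1 ≤ M) (hx : ‖x‖ ≤ M) (hy : ‖y‖ ≤ M)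
    [NormOneClass 𝔸] (n : ℕ) : ‖x ^ n - y ^ n‖ ≤ n * M ^ n * ‖x - y‖ := by
  have hM0 : 0 ≤ M := by linarith
  induction n with
  | zero => simp
  | succ n ih =>
    have e : x ^ (n + 1) - y ^ (n + 1) = x ^ n * (x - y) + (x ^ n - y ^ n) * y := by
      rw [pow_succ, pow_succ]; noncomm_ring
    have h1 : ‖x ^ n‖ ≤ M ^ (n + 1) :=
      (norm_pow_le x n).trans ((pow_le_pow_left₀ (norm_nonneg _) hx n).trans
        (pow_le_pow_right₀ hM n.le_succ))
    calc ‖x ^ (n + 1) - y ^ (n + 1)‖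
        ≤ ‖x ^ n‖ * ‖x - y‖ + ‖x ^ n - y ^ n‖ * ‖y‖ := by
          rw [e]; exact (norm_add_le _ _).trans (add_le_add (norm_mul_le _ _) (norm_mul_le _ _))
      _ ≤ M ^ (n + 1) * ‖x - y‖ + (n * M ^ n * ‖x - y‖) * M := by gcongr
      _ = _ := by push_cast; ring

lemma tendsto_pow_sub_pow_of_hasDerivAt [NormedAlgebra ℝ 𝔸] [NormOneClass 𝔸] {f g : ℝ → 𝔸}
    {X : 𝔸} (hf : HasDerivAt f X 0) (hg : HasDerivAt g X 0) (hf0 : f 0 = 1) (hg0 : g 0 = 1) :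
    Tendsto (fun n : ℕ => f (n : ℝ)⁻¹ ^ n - g (n : ℝ)⁻¹ ^ n) atTop (𝓝 0) := by
  have hinv : Tendsto (fun n : ℕ => (n : ℝ)⁻¹) atTop (𝓝 0) := tendsto_inv_atTop_nhds_zero_nat
  have key : ∀ {h : ℝ → 𝔸}, HasDerivAt h X 0 → h 0 = 1 →
      ∀ᶠ t in 𝓝 (0 : ℝ), ‖h t‖ ≤ 1 + (‖X‖ + 1) * |t| := by
    intro h hh h0
    have := hh.isLittleO.def one_pos
    filter_upwards [this] with t ht
    simp only [sub_zero, h0, one_mul, Real.norm_eq_abs] at ht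
    calc ‖h t‖ = ‖(h t - 1 - t • X) + 1 + t • X‖ := by congr 1; abel
      _ ≤ ‖h t - 1 - t • X‖ + 1 + |t| * ‖X‖ := by
        refine (norm_add₃_le).trans ?_
        rw [norm_one, norm_smul, Real.norm_eq_abs]
      _ ≤ _ := by linarith
  have hd : HasDerivAt (fun t => f t - g t) 0 0 := by simpa using hf.fun_sub hg
  rw [Metric.tendsto_nhds]
  intro δ hδ
  set C := ‖X‖ + 1 with hC
  have hC0 : 0 < C := by positivity
  have hlo := hd.isLittleO.def (show 0 < δ / (2 * Real.exp C) by positivity)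
  filter_upwards [hinv.eventually (key hf hf0), hinv.eventually (key hg hg0),
    hinv.eventually hlo, eventually_gt_atTop 0] with n h1 h2 h3 hn
  have hn' : (0 : ℝ) < n := by exact_mod_cast hn
  simp only [hf0, hg0, sub_self, sub_zero, smul_zero, Real.norm_eq_abs] at h3
  rw [abs_of_pos (inv_pos.2 hn')] at h1 h2 h3
  have h4 := norm_pow_sub_pow_le (by simp; positivity) h1 h2 n
  have h5 : (1 + C * (n : ℝ)⁻¹) ^ n ≤ Real.exp C := by
    calc (1 + C * (n : ℝ)⁻¹) ^ n ≤ Real.exp (C * (n : ℝ)⁻¹) ^ n := by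
          gcongr; rw [add_comm]; exact Real.add_one_le_exp _
      _ = Real.exp C := by rw [← Real.exp_nat_mul]; congr 1; field_simp
  rw [dist_zero_right]
  calc _ ≤ _ := h4
    _ ≤ n * Real.exp C * (δ / (2 * Real.exp C) * (n : ℝ)⁻¹) := by gcongr
    _ = δ / 2 := by field_simp
    _ < δ := by linarith

/-- **Lie product formula.** -/
theorem tendsto_exp_mul_exp_pow [NormedAlgebra ℝ 𝔸] [NormOneClass 𝔸] [CompleteSpace 𝔸]
    (A B : 𝔸) :
    Tendsto (fun n : ℕ => (NormedSpace.exp ((n : ℝ)⁻¹ • A) * NormedSpace.exp ((n : ℝ)⁻¹ • B)) ^ n)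
      atTop (𝓝 (NormedSpace.exp (A + B))) := by
  have hexp : ∀ X : 𝔸, HasDerivAt (fun t : ℝ => NormedSpace.exp (t • X)) X 0 := fun X => by
    simpa using hasDerivAt_exp_smul_const (𝕂 := ℝ) X 0
  have h := tendsto_pow_sub_pow_of_hasDerivAt (f := fun t : ℝ =>
    NormedSpace.exp (t • A) * NormedSpace.exp (t • B)) (X := A + B)
    (by simpa using (hexp A).fun_mul (hexp B)) (hexp (A + B)) (by simp) (by simp)
  have h2 : ∀ᶠ n : ℕ in atTop, NormedSpace.exp ((n : ℝ)⁻¹ • (A + B)) ^ n =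
      NormedSpace.exp (A + B) := by
    filter_upwards [eventually_ne_atTop 0] with n hn
    let _ : NormedAlgebra ℚ 𝔸 := NormedAlgebra.restrictScalars ℚ ℝ 𝔸
    rw [← NormedSpace.exp_nsmul, ← Nat.cast_smul_eq_nsmul ℝ, smul_smul,
      mul_inv_cancel₀ (by exact_mod_cast hn), one_smul]
  have h3 := h.add_const (NormedSpace.exp (A + B))
  rw [zero_add] at h3
  refine h3.congr' ?_
  filter_upwards [h2] with n hn
  rw [hn, sub_add_cancel]

end Trotter

section GoldenThompson

open Filter Topology

variable {V : Type*} [Fintype V] [DecidableEq V]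

attribute [local instance] Matrix.linftyOpNormedRing Matrix.linftyOpNormedAlgebra

/-- **Golden–Thompson inequality** for real symmetric matrices. -/
theorem trace_exp_add_le {A B : Matrix V V ℝ} (hA : A.IsHermitian) (hB : B.IsHermitian) :
    (NormedSpace.exp (A + B)).trace ≤ (NormedSpace.exp A * NormedSpace.exp B).trace := by
  cases isEmpty_or_nonempty V
  · simp [Matrix.trace]
  have h := (tendsto_exp_mul_exp_pow A B).comp
    (tendsto_pow_atTop_atTop_of_one_lt (r := 2) one_lt_two)
  have ht : Continuous fun M : Matrix V V ℝ => M.trace := continuous_id.matrix_trace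
  refine le_of_tendsto ((ht.tendsto _).comp h) (Eventually.of_forall fun k => ?_)
  have hpow : ∀ X : Matrix V V ℝ,
      NormedSpace.exp (((2 ^ k : ℕ) : ℝ)⁻¹ • X) ^ 2 ^ k = NormedSpace.exp X := fun X => by
    rw [← Matrix.exp_nsmul, ← Nat.cast_smul_eq_nsmul ℝ, smul_smul,
      mul_inv_cancel₀ (by positivity), one_smul]
  have hherm : ∀ {X : Matrix V V ℝ} (r : ℝ), X.IsHermitian →
      (NormedSpace.exp (r • X)).IsHermitian := fun r hX =>
    Matrix.IsHermitian.exp (by rw [IsHermitian, conjTranspose_smul, hX.eq, star_trivial])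
  have h1 := (trace_pow_two_pow_le (V := V) k).2 _ _ (hherm ((2 ^ k : ℕ) : ℝ)⁻¹ hA)
    (hherm ((2 ^ k : ℕ) : ℝ)⁻¹ hB)
  rwa [hpow, hpow] at h1

end GoldenThompson

section Chernoff

open scoped MatrixOrder

variable {V : Type*} [Fintype V] [DecidableEq V]

lemma exists_unitary_diagonalization {M : Matrix V V ℝ} (hM : M.IsHermitian) :
    ∃ (U : Matrix V V ℝ) (d : V → ℝ), U * Uᴴ = 1 ∧ Uᴴ * U = 1 ∧ M = U * diagonal d * Uᴴ := by
  refine ⟨hM.eigenvectorUnitary, hM.eigenvalues, ?_, ?_, ?_⟩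
  · exact Unitary.coe_mul_star_self hM.eigenvectorUnitary
  · exact Unitary.coe_star_mul_self hM.eigenvectorUnitary
  · conv_lhs => rw [hM.spectral_theorem, Unitary.conjStarAlgAut_apply]
    rfl

lemma exp_unitary_conj_diagonal {U : Matrix V V ℝ} (hU : U * Uᴴ = 1) (d : V → ℝ) :
    NormedSpace.exp (U * diagonal d * Uᴴ) = U * diagonal (fun i => Real.exp (d i)) * Uᴴ := by
  have hinv : U⁻¹ = Uᴴ := Matrix.inv_eq_right_inv hU
  have hunit : IsUnit U := IsUnit.of_mul_eq_one _ hU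
  rw [← hinv, Matrix.exp_conj _ _ hunit, Matrix.exp_diagonal]
  congr 3
  ext i
  rw [Pi.coe_exp, Real.exp_eq_exp_ℝ]

lemma trace_unitary_conj {U : Matrix V V ℝ} (hU : Uᴴ * U = 1) (D : Matrix V V ℝ) :
    (U * D * Uᴴ).trace = D.trace := by
  rw [trace_mul_comm, ← Matrix.mul_assoc, hU, Matrix.one_mul]

lemma unitary_conj_diagonal_le {U : Matrix V V ℝ} {d₁ d₂ : V → ℝ} (h : ∀ i, d₁ i ≤ d₂ i) :
    U * diagonal d₁ * Uᴴ ≤ U * diagonal d₂ * Uᴴ := by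
  rw [Matrix.le_iff, ← Matrix.sub_mul, ← Matrix.mul_sub, diagonal_sub]
  exact (PosSemidef.diagonal fun i => sub_nonneg.2 (h i)).mul_mul_conjTranspose_same U

lemma diagonal_le_of_unitary_conj_le {U : Matrix V V ℝ} (hU : Uᴴ * U = 1) {d₁ d₂ : V → ℝ}
    (h : U * diagonal d₁ * Uᴴ ≤ U * diagonal d₂ * Uᴴ) (i : V) : d₁ i ≤ d₂ i := by
  rw [Matrix.le_iff, ← Matrix.sub_mul, ← Matrix.mul_sub, diagonal_sub] at h
  have h2 := h.conjTranspose_mul_mul_same U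
  rw [← Matrix.mul_assoc, ← Matrix.mul_assoc, hU, Matrix.one_mul, Matrix.mul_assoc, hU,
    Matrix.mul_one, posSemidef_diagonal_iff] at h2
  exact sub_nonneg.1 (h2 i)

lemma unitary_conj_diagonal_const {U : Matrix V V ℝ} (hU : U * Uᴴ = 1) (r : ℝ) :
    U * diagonal (fun _ => r) * Uᴴ = r • (1 : Matrix V V ℝ) := by
  rw [← smul_one_eq_diagonal, Matrix.mul_smul, Matrix.smul_mul, Matrix.mul_one, hU]

lemma Real.exp_le_one_add_add_sq {x : ℝ} (h1 : -(1 / 2) ≤ x) (h2 : x ≤ 1 / 2) :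
    Real.exp x ≤ 1 + x + 2 / 3 * x ^ 2 := by
  have hx : |x| ≤ 1 / 2 := abs_le.2 ⟨h1, h2⟩
  have h := Real.exp_bound (x := x) (by linarith) (n := 3) (by norm_num)
  norm_num [Finset.sum_range_succ, Nat.factorial] at h
  have h3 := (abs_le.1 h).2
  have h4 : |x| ^ 3 ≤ 1 / 2 * x ^ 2 := by
    rw [pow_succ', ← sq_abs x]
    gcongr
  linarith [sq_nonneg x]

lemma exp_le_one_add_add_sq {Y : Matrix V V ℝ} (hY : Y.IsHermitian)
    (h1 : -(1 / 2 : ℝ) • (1 : Matrix V V ℝ) ≤ Y) (h2 : Y ≤ (1 / 2 : ℝ) • (1 : Matrix V V ℝ)) :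
    NormedSpace.exp Y ≤ 1 + Y + (2 / 3 : ℝ) • (Y * Y) := by
  obtain ⟨U, d, hU, hU', rfl⟩ := exists_unitary_diagonalization hY
  rw [← unitary_conj_diagonal_const hU] at h1 h2
  have hd1 := diagonal_le_of_unitary_conj_le hU' h1
  have hd2 := diagonal_le_of_unitary_conj_le hU' h2
  have e : 1 + U * diagonal d * Uᴴ + (2 / 3 : ℝ) • (U * diagonal d * Uᴴ * (U * diagonal d * Uᴴ)) =
      U * diagonal (fun i => 1 + d i + 2 / 3 * d i ^ 2) * Uᴴ := by
    have e1 : U * diagonal d * Uᴴ * (U * diagonal d * Uᴴ) =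
        U * (diagonal d * diagonal d) * Uᴴ := by
      calc _ = U * diagonal d * (Uᴴ * U) * diagonal d * Uᴴ := by simp only [Matrix.mul_assoc]
        _ = _ := by rw [hU', Matrix.mul_one, Matrix.mul_assoc U]
    have e2 : diagonal (fun i => 1 + d i + 2 / 3 * d i ^ 2) =
        1 + diagonal d + (2 / 3 : ℝ) • (diagonal d * diagonal d) := by
      rw [diagonal_mul_diagonal, ← diagonal_one, ← diagonal_smul, diagonal_add, diagonal_add]
      congr 1; ext i; simp [pow_two]
    rw [e1, e2, Matrix.mul_add, Matrix.mul_add, Matrix.add_mul, Matrix.add_mul, Matrix.mul_one, hU,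
      Matrix.mul_smul, Matrix.smul_mul]
  rw [exp_unitary_conj_diagonal hU, e]
  exact unitary_conj_diagonal_le fun i => Real.exp_le_one_add_add_sq (hd1 i) (hd2 i)

lemma trace_exp_nonneg {M : Matrix V V ℝ} (hM : M.IsHermitian) :
    0 ≤ (NormedSpace.exp M).trace := by
  obtain ⟨U, d, hU, hU', rfl⟩ := exists_unitary_diagonalization hM
  rw [exp_unitary_conj_diagonal hU, trace_unitary_conj hU', trace_diagonal]
  exact Finset.sum_nonneg fun i _ => (Real.exp_pos _).le

lemma le_smul_one_of_trace_exp_le {M : Matrix V V ℝ} (hM : M.IsHermitian) {r : ℝ}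
    (h : (NormedSpace.exp M).trace ≤ Real.exp r) : M ≤ r • (1 : Matrix V V ℝ) := by
  obtain ⟨U, d, hU, hU', rfl⟩ := exists_unitary_diagonalization hM
  rw [exp_unitary_conj_diagonal hU, trace_unitary_conj hU', trace_diagonal] at h
  rw [← unitary_conj_diagonal_const hU]
  refine unitary_conj_diagonal_le fun i => Real.exp_le_exp.1 (le_trans ?_ h)
  exact Finset.single_le_sum (f := fun i => Real.exp (d i)) (fun j _ => (Real.exp_pos _).le)
    (Finset.mem_univ i)

lemma trace_exp_mul_mono {M Z W : Matrix V V ℝ} (hM : M.IsHermitian) (h : Z ≤ W) :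
    (NormedSpace.exp M * Z).trace ≤ (NormedSpace.exp M * W).trace := by
  obtain ⟨U, d, hU, hU', rfl⟩ := exists_unitary_diagonalization hM
  rw [exp_unitary_conj_diagonal hU, ← sub_nonneg, ← trace_sub, ← Matrix.mul_sub]
  have h2 := (Matrix.le_iff.1 h).conjTranspose_mul_mul_same U
  have h3 : (U * diagonal (fun i => Real.exp (d i)) * Uᴴ * (W - Z)).trace =
      (diagonal (fun i => Real.exp (d i)) * (Uᴴ * (W - Z) * U)).trace := by
    rw [Matrix.mul_assoc, Matrix.mul_assoc, trace_mul_comm]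
    simp only [Matrix.mul_assoc]
  rw [h3, trace]
  simp only [diag_apply, diagonal_mul]
  exact Finset.sum_nonneg fun i _ => mul_nonneg (Real.exp_pos _).le h2.diag_nonneg

/-- Single step of the derandomized matrix Chernoff bound, one-sided and averaged. -/
lemma sum_trace_exp_add_le {ι : Type*} [Fintype ι] {p : ι → ℝ} (hp : ∀ i, 0 ≤ p i)
    (hp1 : ∑ i, p i = 1) {Y : ι → Matrix V V ℝ} (hY : ∀ i, (Y i).IsHermitian)
    (hY0 : ∑ i, p i • Y i = 0) (hl : ∀ i, -(1 / 2 : ℝ) • (1 : Matrix V V ℝ) ≤ Y i)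
    (hu : ∀ i, Y i ≤ (1 / 2 : ℝ) • (1 : Matrix V V ℝ)) {s : ℝ}
    (hs : ∑ i, p i • (Y i * Y i) ≤ s • (1 : Matrix V V ℝ))
    {M : Matrix V V ℝ} (hM : M.IsHermitian) :
    ∑ i, p i * (NormedSpace.exp (M + Y i)).trace ≤
      (1 + 2 / 3 * s) * (NormedSpace.exp M).trace := by
  have h1 : ∑ i, p i • (1 + Y i + (2 / 3 : ℝ) • (Y i * Y i)) ≤
      (1 + 2 / 3 * s) • (1 : Matrix V V ℝ) := by
    have e : ∑ i, p i • (1 + Y i + (2 / 3 : ℝ) • (Y i * Y i)) =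
        1 + (2 / 3 : ℝ) • ∑ i, p i • (Y i * Y i) := by
      simp only [smul_add, Finset.sum_add_distrib, hY0, ← Finset.sum_smul, hp1, one_smul, add_zero,
        Finset.smul_sum, smul_comm (p _) (2 / 3 : ℝ)]
    rw [e, add_smul, one_smul, mul_smul]
    gcongr
  calc ∑ i, p i * (NormedSpace.exp (M + Y i)).trace
      ≤ ∑ i, p i * (NormedSpace.exp M * (1 + Y i + (2 / 3 : ℝ) • (Y i * Y i))).trace := by
        refine Finset.sum_le_sum fun i _ => mul_le_mul_of_nonneg_left ?_ (hp i)
        exact (trace_exp_add_le hM (hY i)).trans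
          (trace_exp_mul_mono hM (exp_le_one_add_add_sq (hY i) (hl i) (hu i)))
    _ = (NormedSpace.exp M * ∑ i, p i • (1 + Y i + (2 / 3 : ℝ) • (Y i * Y i))).trace := by
        rw [Matrix.mul_sum, trace_sum]
        simp only [Matrix.mul_smul, trace_smul, smul_eq_mul]
    _ ≤ (NormedSpace.exp M * ((1 + 2 / 3 * s) • (1 : Matrix V V ℝ))).trace :=
        trace_exp_mul_mono hM h1
    _ = _ := by rw [Matrix.mul_smul, Matrix.mul_one, trace_smul, smul_eq_mul]

lemma exists_le_of_weighted_sum_le {ι : Type*} [Fintype ι] {p f : ι → ℝ} (hp : ∀ i, 0 ≤ p i)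
    (hp1 : ∑ i, p i = 1) {r : ℝ} (h : ∑ i, p i * f i ≤ r) : ∃ i, f i ≤ r := by
  by_contra! hf
  obtain ⟨j, -, hj⟩ := Finset.exists_ne_zero_of_sum_ne_zero (hp1.trans_ne one_ne_zero)
  have : ∑ i, p i * r < ∑ i, p i * f i :=
    Finset.sum_lt_sum (fun i _ => mul_le_mul_of_nonneg_left (hf i).le (hp i))
      ⟨j, Finset.mem_univ j, mul_lt_mul_of_pos_left (hf j) ((hp j).lt_of_ne' hj)⟩
  rw [← Finset.sum_mul, hp1] at this
  linarith

/-- Derandomized **matrix Chernoff bound**: `k` independent samples of a centred bounded random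
symmetric matrix can be chosen so that their sum is small in both directions. -/
theorem exists_counts_sum_le {ι : Type*} [Fintype ι] [DecidableEq ι] [Nonempty V] {p : ι → ℝ}
    (hp : ∀ i, 0 ≤ p i) (hp1 : ∑ i, p i = 1) {Y : ι → Matrix V V ℝ}
    (hY : ∀ i, (Y i).IsHermitian) (hY0 : ∑ i, p i • Y i = 0)
    (hl : ∀ i, -(1 / 2 : ℝ) • (1 : Matrix V V ℝ) ≤ Y i)
    (hu : ∀ i, Y i ≤ (1 / 2 : ℝ) • (1 : Matrix V V ℝ)) {s : ℝ} (hs0 : 0 ≤ s)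
    (hs : ∑ i, p i • (Y i * Y i) ≤ s • (1 : Matrix V V ℝ)) (k : ℕ) :
    ∃ N : ι → ℕ, ∑ i, N i = k ∧
      ∑ i, (N i : ℝ) • Y i ≤ (Real.log (2 * Fintype.card V) + k * (2 / 3 * s)) • 1 ∧
      -∑ i, (N i : ℝ) • Y i ≤ (Real.log (2 * Fintype.card V) + k * (2 / 3 * s)) • 1 := by
  have hherm : ∀ N : ι → ℕ, (∑ i, (N i : ℝ) • Y i).IsHermitian := fun N => by
    simp only [IsHermitian, conjTranspose_sum, conjTranspose_smul, (hY _).eq, star_trivial]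
  have hpot : ∀ k : ℕ, ∃ N : ι → ℕ, ∑ i, N i = k ∧
      (NormedSpace.exp (∑ i, (N i : ℝ) • Y i)).trace +
        (NormedSpace.exp (-∑ i, (N i : ℝ) • Y i)).trace ≤
      2 * Fintype.card V * (1 + 2 / 3 * s) ^ k := by
    intro k
    induction k with
    | zero => exact ⟨0, by simp, by simp [two_mul]⟩
    | succ k ih =>
      obtain ⟨N, hN, hle⟩ := ih
      have h1 := sum_trace_exp_add_le hp hp1 hY hY0 hl hu hs (hherm N)
      have h2 := sum_trace_exp_add_le hp hp1 (Y := fun i => -Y i) (fun i => (hY i).neg)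
        (by simpa using hY0) (fun i => by simpa using neg_le_neg (hu i))
        (fun i => by simpa using neg_le_neg (hl i)) (by simpa using hs) (hherm N).neg
      obtain ⟨j, hj⟩ := exists_le_of_weighted_sum_le
        (f := fun j => (NormedSpace.exp (∑ i, (N i : ℝ) • Y i + Y j)).trace +
          (NormedSpace.exp (-∑ i, (N i : ℝ) • Y i + -Y j)).trace) hp hp1
        (by simpa only [mul_add, Finset.sum_add_distrib] using add_le_add h1 h2)
      have e : ∑ i, ((N i + (Pi.single j 1 : ι → ℕ) i : ℕ) : ℝ) • Y i =
          ∑ i, (N i : ℝ) • Y i + Y j := by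
        simp [add_smul, Finset.sum_add_distrib, Pi.single_apply]
      refine ⟨fun i => N i + (Pi.single j 1 : ι → ℕ) i, by simp [Finset.sum_add_distrib, hN], ?_⟩
      rw [e, neg_add]
      calc _ ≤ _ := hj
        _ = (1 + 2 / 3 * s) * ((NormedSpace.exp (∑ i, (N i : ℝ) • Y i)).trace +
              (NormedSpace.exp (-∑ i, (N i : ℝ) • Y i)).trace) := by ring
        _ ≤ (1 + 2 / 3 * s) * (2 * Fintype.card V * (1 + 2 / 3 * s) ^ k) := by gcongr
        _ = _ := by ring
  obtain ⟨N, hN, hle⟩ := hpot k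
  have hbound : 2 * Fintype.card V * (1 + 2 / 3 * s) ^ k ≤
      Real.exp (Real.log (2 * Fintype.card V) + k * (2 / 3 * s)) := by
    rw [Real.exp_add, Real.exp_log (by simp [Fintype.card_pos]), Real.exp_nat_mul]
    gcongr
    rw [add_comm]; exact Real.add_one_le_exp _
  have h1 := trace_exp_nonneg (hherm N)
  have h2 := trace_exp_nonneg (hherm N).neg
  exact ⟨N, hN, le_smul_one_of_trace_exp_le (hherm N) (by linarith),
    le_smul_one_of_trace_exp_le (hherm N).neg (by linarith)⟩

end Chernoff

section Sparsification

open scoped MatrixOrder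

variable {V : Type*} [Fintype V]

lemma dotProduct_self_nonneg_real (v : V → ℝ) : 0 ≤ v ⬝ᵥ v :=
  Finset.sum_nonneg fun i _ => mul_self_nonneg (v i)

lemma vecMulVec_self_mul_self (v : V → ℝ) :
    vecMulVec v v * vecMulVec v v = (v ⬝ᵥ v) • vecMulVec v v := by
  rw [vecMulVec_mul_vecMulVec, vecMulVec_smul]

lemma posSemidef_vecMulVec_self (v : V → ℝ) : (vecMulVec v v).PosSemidef := by
  simpa using posSemidef_vecMulVec_self_star v

lemma mul_self_nonneg_of_isHermitian {A : Matrix V V ℝ} (hA : A.IsHermitian) : 0 ≤ A * A := by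
  have h := posSemidef_conjTranspose_mul_self A
  rw [hA.eq] at h
  exact nonneg_iff_posSemidef.2 h

variable [DecidableEq V]

lemma vecMulVec_self_le (v : V → ℝ) : vecMulVec v v ≤ (v ⬝ᵥ v) • (1 : Matrix V V ℝ) := by
  rcases (dotProduct_self_nonneg_real v).eq_or_lt' with h | h
  · simp [dotProduct_self_eq_zero.1 h]
  · have hherm : ((v ⬝ᵥ v) • (1 : Matrix V V ℝ) - vecMulVec v v).IsHermitian :=
      (isHermitian_one.smul (IsSelfAdjoint.all _)).sub (posSemidef_vecMulVec_self v).1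
    have h2 := smul_nonneg (inv_nonneg.2 h.le) (mul_self_nonneg_of_isHermitian hherm)
    have e : ((v ⬝ᵥ v) • (1 : Matrix V V ℝ) - vecMulVec v v) *
        ((v ⬝ᵥ v) • (1 : Matrix V V ℝ) - vecMulVec v v) =
        (v ⬝ᵥ v) • ((v ⬝ᵥ v) • (1 : Matrix V V ℝ) - vecMulVec v v) := by
      simp only [Matrix.mul_sub, Matrix.sub_mul, vecMulVec_self_mul_self, Matrix.smul_mul,
        Matrix.mul_smul, Matrix.one_mul, Matrix.mul_one, smul_sub]
      abel
    rwa [e, inv_smul_smul₀ h.ne', sub_nonneg] at h2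

theorem exists_sparse_weights {E : Type*} [Fintype E] [DecidableEq E] [Nonempty V]
    (v : E → V → ℝ) (hA : ∑ e, vecMulVec (v e) (v e) ≤ (1 : Matrix V V ℝ)) {ε : ℝ} (hε0 : 0 < ε)
    (hε1 : ε < 1) {T : ℕ}
    (hT : 3 * (1 + ∑ e, v e ⬝ᵥ v e) * Real.log (2 * Fintype.card V) ≤ T * ε ^ 2) :
    ∃ w : E → ℝ, (∀ e, 0 ≤ w e) ∧ (Finset.univ.filter fun e => w e ≠ 0).card ≤ T ∧
      ∑ e, w e • vecMulVec (v e) (v e) - ∑ e, vecMulVec (v e) (v e) ≤ ε • (1 : Matrix V V ℝ) ∧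
      ∑ e, vecMulVec (v e) (v e) - ∑ e, w e • vecMulVec (v e) (v e) ≤ ε • (1 : Matrix V V ℝ) := by
  set R := 1 + ∑ e, v e ⬝ᵥ v e with hR
  set A := ∑ e, vecMulVec (v e) (v e) with hAdef
  have hvv : ∀ e, 0 ≤ v e ⬝ᵥ v e := fun e => dotProduct_self_nonneg_real _
  have hR1 : 1 ≤ R := by
    have := Finset.sum_nonneg fun e (_ : e ∈ Finset.univ) => hvv e
    linarith
  have hR0 : 0 < R := by linarith
  have hA0 : 0 ≤ A := Finset.sum_nonneg fun e _ =>
    nonneg_iff_posSemidef.2 (posSemidef_vecMulVec_self _)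
  have hAh : A.IsHermitian := (nonneg_iff_posSemidef.1 hA0).1
  set p : Option E → ℝ := fun o => o.elim R⁻¹ fun e => (v e ⬝ᵥ v e) / R with hp
  set X : Option E → Matrix V V ℝ := fun o => o.elim 0 fun e =>
    ((v e ⬝ᵥ v e) / R)⁻¹ • vecMulVec (v e) (v e) with hX
  have hp0 : ∀ o, 0 ≤ p o := by
    rintro (_ | e)
    · exact inv_nonneg.2 hR0.le
    · exact div_nonneg (hvv e) hR0.le
  have hp1 : ∑ o, p o = 1 := by
    rw [Fintype.sum_option]
    simp only [hp, Option.elim, ← Finset.sum_div]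
    rw [inv_eq_one_div, ← add_div, ← hR, div_self hR0.ne']
  have hcancel : ∀ e, ((v e ⬝ᵥ v e) / R) • ((v e ⬝ᵥ v e) / R)⁻¹ • vecMulVec (v e) (v e) =
      vecMulVec (v e) (v e) := fun e => by
    rcases (hvv e).eq_or_lt' with h | h
    · simp [dotProduct_self_eq_zero.1 h]
    · rw [smul_inv_smul₀ (div_pos h hR0).ne']
  have hpX : ∑ o, p o • X o = A := by
    rw [Fintype.sum_option]
    simp only [hp, hX, Option.elim, smul_zero, zero_add, hcancel, hAdef]
  have hXX : ∀ o, X o * X o = R • X o := by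
    rintro (_ | e)
    · simp [hX]
    · simp only [hX, Option.elim, Matrix.smul_mul, Matrix.mul_smul, vecMulVec_self_mul_self]
      rcases (hvv e).eq_or_lt' with h | h
      · simp [dotProduct_self_eq_zero.1 h]
      · simp only [smul_smul]
        congr 1
        field_simp
  have hX0 : ∀ o, 0 ≤ X o := by
    rintro (_ | e)
    · exact le_rfl
    · exact smul_nonneg (inv_nonneg.2 (div_nonneg (hvv e) hR0.le))
        (nonneg_iff_posSemidef.2 (posSemidef_vecMulVec_self _))
  have hXR : ∀ o, X o ≤ R • (1 : Matrix V V ℝ) := by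
    rintro (_ | e)
    · exact smul_nonneg hR0.le (nonneg_iff_posSemidef.2 PosSemidef.one)
    · simp only [hX, Option.elim]
      rcases (hvv e).eq_or_lt' with h | h
      · simpa [dotProduct_self_eq_zero.1 h] using
          smul_nonneg hR0.le (nonneg_iff_posSemidef.2 (PosSemidef.one (n := V) (R := ℝ)))
      · refine (smul_le_smul_of_nonneg_left (vecMulVec_self_le (v e))
          (inv_nonneg.2 (div_nonneg (hvv e) hR0.le))).trans_eq ?_
        rw [smul_smul]
        congr 1
        field_simp
  have hXh : ∀ o, (X o).IsHermitian := fun o => (nonneg_iff_posSemidef.1 (hX0 o)).1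
  have hone : (0 : Matrix V V ℝ) ≤ 1 := nonneg_iff_posSemidef.2 PosSemidef.one
  set θ := ε / (2 * R) with hθ
  have hθ0 : 0 < θ := by positivity
  have hθR : θ * R = ε / 2 := by rw [hθ]; field_simp
  have hθ1 : θ ≤ 1 / 2 := by nlinarith
  set Y : Option E → Matrix V V ℝ := fun o => θ • (X o - A) with hY
  have hYh : ∀ o, (Y o).IsHermitian := fun o => ((hXh o).sub hAh).smul (IsSelfAdjoint.all _)
  have hY0 : ∑ o, p o • Y o = 0 := by
    simp only [hY, smul_comm (p _) θ, ← Finset.smul_sum, smul_sub, Finset.sum_sub_distrib,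
      ← Finset.sum_smul, hp1, hpX, one_smul, sub_self]
  have hYl : ∀ o, -(1 / 2 : ℝ) • (1 : Matrix V V ℝ) ≤ Y o := fun o => by
    have h1 : -1 ≤ X o - A := by
      rw [neg_le_sub_iff_le_add]
      exact hA.trans (le_add_of_nonneg_left (hX0 o))
    calc -(1 / 2 : ℝ) • (1 : Matrix V V ℝ) ≤ -θ • (1 : Matrix V V ℝ) :=
          smul_le_smul_of_nonneg_right (neg_le_neg hθ1) hone
      _ = θ • (-1 : Matrix V V ℝ) := by rw [neg_smul, smul_neg]
      _ ≤ Y o := smul_le_smul_of_nonneg_left h1 hθ0.le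
  have hYu : ∀ o, Y o ≤ (1 / 2 : ℝ) • (1 : Matrix V V ℝ) := fun o =>
    calc Y o ≤ θ • (R • (1 : Matrix V V ℝ)) :=
          smul_le_smul_of_nonneg_left ((sub_le_self _ hA0).trans (hXR o)) hθ0.le
      _ = (ε / 2) • (1 : Matrix V V ℝ) := by rw [smul_smul, hθR]
      _ ≤ _ := smul_le_smul_of_nonneg_right (by linarith) hone
  have hYY : ∑ o, p o • (Y o * Y o) ≤ (θ ^ 2 * R) • (1 : Matrix V V ℝ) := by
    have e : ∀ o, p o • (Y o * Y o) =
        θ ^ 2 • (R • (p o • X o) - p o • X o * A - A * (p o • X o) + p o • (A * A)) := fun o => by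
      simp only [hY, Matrix.smul_mul, Matrix.mul_smul, smul_smul, Matrix.sub_mul, Matrix.mul_sub,
        hXX, smul_sub, smul_add]
      module
    have e2 : ∑ o, p o • (Y o * Y o) = θ ^ 2 • (R • A - A * A) := by
      simp only [e, ← Finset.smul_sum, Finset.sum_add_distrib, Finset.sum_sub_distrib,
        ← Matrix.sum_mul, ← Matrix.mul_sum, hpX, ← Finset.sum_smul, hp1, one_smul]
      congr 1
      abel
    rw [e2, mul_smul]
    exact smul_le_smul_of_nonneg_left ((sub_le_self _ (mul_self_nonneg_of_isHermitian hAh)).trans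
      (smul_le_smul_of_nonneg_left hA hR0.le)) (by positivity)
  obtain ⟨N, hN, hle1, hle2⟩ :=
    exists_counts_sum_le hp0 hp1 hYh hY0 hYl hYu (by positivity) hYY T
  have hlog : 0 < Real.log (2 * Fintype.card V) := Real.log_pos (by
    have : (1 : ℝ) ≤ Fintype.card V := by exact_mod_cast Fintype.card_pos
    linarith)
  have hT0 : (0 : ℝ) < T := by
    by_contra! h
    have h1 : 0 < 3 * R * Real.log (2 * Fintype.card V) := by positivity
    nlinarith [sq_nonneg ε]
  have hr : Real.log (2 * Fintype.card V) + T * (2 / 3 * (θ ^ 2 * R)) ≤ θ * T * ε := by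
    have h1 : θ ^ 2 * R = θ * (ε / 2) := by rw [pow_two, mul_assoc, hθR]
    have h2 : Real.log (2 * Fintype.card V) ≤ 2 / 3 * (θ * T * ε) := by
      rw [hθ]
      have : 2 / 3 * (ε / (2 * R) * T * ε) = (T * ε ^ 2) / (3 * R) := by field_simp
      rw [this, le_div_iff₀ (by positivity)]
      linarith
    rw [h1]
    linarith
  set w : E → ℝ := fun e => N (some e) * ((v e ⬝ᵥ v e) / R)⁻¹ / T with hw
  have hsum : ∑ o, (N o : ℝ) • Y o = (θ * T) • (∑ e, w e • vecMulVec (v e) (v e) - A) := by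
    have h1 : ∑ o, (N o : ℝ) • X o = (T : ℝ) • ∑ e, w e • vecMulVec (v e) (v e) := by
      rw [Fintype.sum_option, Finset.smul_sum]
      simp only [hX, Option.elim, smul_zero, zero_add, hw, smul_smul]
      refine Finset.sum_congr rfl fun e _ => ?_
      congr 1
      field_simp
    have h2 : ∑ o, (N o : ℝ) = T := by exact_mod_cast hN
    simp only [hY, smul_comm (N _ : ℝ) θ, ← Finset.smul_sum, smul_sub (N _ : ℝ),
      Finset.sum_sub_distrib, h1, ← Finset.sum_smul, h2]
    rw [mul_smul, smul_sub (T : ℝ)]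
  have hscale : ∀ Z : Matrix V V ℝ, (θ * T) • Z ≤
      (Real.log (2 * Fintype.card V) + T * (2 / 3 * (θ ^ 2 * R))) • (1 : Matrix V V ℝ) →
      Z ≤ ε • (1 : Matrix V V ℝ) := fun Z hZ => by
    have h1 := hZ.trans (smul_le_smul_of_nonneg_right hr hone)
    rw [mul_smul (θ * T)] at h1
    exact le_of_smul_le_smul_left h1 (by positivity)
  refine ⟨w, fun e => ?_, ?_, hscale _ (hsum ▸ hle1), hscale _ ?_⟩
  · have := hvv e
    positivity
  · rw [Finset.card_eq_sum_ones, Finset.sum_filter]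
    rw [Fintype.sum_option] at hN
    calc _ ≤ ∑ e, N (some e) := Finset.sum_le_sum fun e _ => by
          split_ifs with h
          · refine Nat.one_le_iff_ne_zero.2 fun h0 => h ?_
            simp [hw, h0]
          · exact Nat.zero_le _
      _ ≤ T := by omega
  · rw [hsum, ← smul_neg, neg_sub] at hle2
    exact hle2

end Sparsification

section Laplacian

open scoped MatrixOrder

lemma PosSemidef.exists_eq_conjTranspose_mul_self {V : Type*} [Fintype V] [DecidableEq V]
    {L : Matrix V V ℝ} (hL : L.PosSemidef) : ∃ K : Matrix V V ℝ, L = Kᴴ * K := by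
  obtain ⟨K, hK⟩ := CStarAlgebra.nonneg_iff_eq_star_mul_self.mp hL.nonneg
  exact ⟨K, hK⟩

lemma IsMPInv.mul_comm_of_transpose_eq {V : Type*} [Fintype V] {L M : Matrix V V ℝ}
    (h : IsMPInv L M) (hL : Lᵀ = L) : L * M = M * L := by
  obtain ⟨h1, -, h3, h4⟩ := h
  have e1 : L * (L * M) = L := by
    have := congrArg transpose h1
    rwa [transpose_mul, h3, hL] at this
  have e2 : M * L * L = L := by
    have := congrArg transpose h1
    rwa [Matrix.mul_assoc, transpose_mul, h4, hL] at this
  calc L * M = (M * L * L) * M := by rw [e2]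
    _ = M * (L * (L * M)) := by simp only [Matrix.mul_assoc]
    _ = M * L := by rw [e1]

lemma IsMPInv.transpose_eq {V : Type*} [Fintype V] {L M : Matrix V V ℝ}
    (h : IsMPInv L M) (hL : Lᵀ = L) : Mᵀ = M := by
  have hc := h.mul_comm_of_transpose_eq hL
  obtain ⟨h1, h2, h3, h4⟩ := h
  have e1 : Mᵀ * L = L * M := by rw [← h3, transpose_mul, hL]
  have e2 : L * Mᵀ = M * L := by rw [← h4, transpose_mul, hL]
  calc Mᵀ = Mᵀ * L * Mᵀ := by
        conv_lhs => rw [← h2]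
        rw [transpose_mul, transpose_mul, hL, Matrix.mul_assoc]
    _ = M * L * Mᵀ := by rw [e1, hc]
    _ = M * (L * M) := by rw [Matrix.mul_assoc, e2, hc]
    _ = M := by rw [← Matrix.mul_assoc, h2]

lemma vecMulVec_mulVec_self {V : Type*} [Fintype V] (W : Matrix V V ℝ) (x : V → ℝ) :
    vecMulVec (W *ᵥ x) (W *ᵥ x) = W * vecMulVec x x * Wᴴ := by
  rw [mul_vecMulVec, vecMulVec_mul, conjTranspose_eq_transpose_of_trivial, vecMul_transpose]

variable {V E : Type*} [DecidableEq V] [Fintype E]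

lemma lapM_sub (a b : E → V) (c c' : E → ℝ) :
    lapM a b c - lapM a b c' = lapM a b (c - c') := by
  simp only [lapM, ← Finset.sum_sub_distrib, ← sub_smul, Pi.sub_apply]

variable [Fintype V]

lemma mul_lapM_mul_conjTranspose (a b : E → V) (c : E → ℝ) (W : Matrix V V ℝ) :
    W * lapM a b c * Wᴴ =
      ∑ e, c e • vecMulVec (W *ᵥ incv (a e) (b e)) (W *ᵥ incv (a e) (b e)) := by
  simp only [lapM, Matrix.mul_sum, Matrix.sum_mul, Matrix.mul_smul, Matrix.smul_mul,
    vecMulVec_mulVec_self]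

lemma posSemidef_lapM (a b : E → V) {c : E → ℝ} (hc : ∀ e, 0 ≤ c e) :
    (lapM a b c).PosSemidef :=
  posSemidef_sum _ fun e _ => (posSemidef_vecMulVec_self _).smul (hc e)

lemma IsMPInv.mul_mulVec_incv {a b : E → V} {c : E → ℝ} (hc : ∀ e, 0 < c e)
    {Lp : Matrix V V ℝ} (hLp : IsMPInv (lapM a b c) Lp) (e : E) :
    (lapM a b c * Lp) *ᵥ incv (a e) (b e) = incv (a e) (b e) := by
  set P := lapM a b c * Lp with hP
  have h0 : ∑ e, c e • vecMulVec ((1 - P) *ᵥ incv (a e) (b e)) ((1 - P) *ᵥ incv (a e) (b e)) =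
      0 := by
    rw [← mul_lapM_mul_conjTranspose, Matrix.sub_mul, Matrix.one_mul, hP, hLp.1, sub_self,
      Matrix.zero_mul]
  have h1 := congrArg trace h0
  simp only [trace_sum, trace_smul, trace_vecMulVec, trace_zero, smul_eq_mul] at h1
  rw [Finset.sum_eq_zero_iff_of_nonneg fun e _ =>
    mul_nonneg (hc e).le (dotProduct_self_nonneg_real _)] at h1
  have h2 := (mul_eq_zero.1 (h1 e (Finset.mem_univ e))).resolve_left (hc e).ne'
  rw [dotProduct_self_eq_zero, Matrix.sub_mulVec, Matrix.one_mulVec, sub_eq_zero] at h2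
  exact h2.symm

theorem exists_subset_sparsifier [DecidableEq E] (hn : 1 < Fintype.card V)
    (a b : E → V) (c : E → ℝ) (hc : ∀ e, 0 < c e) (F : Finset E)
    {ε : ℝ} (hε0 : 0 < ε) (hε1 : ε < 1) {Lp : Matrix V V ℝ} (hLp : IsMPInv (lapM a b c) Lp) :
    ∃ c' : E → ℝ,
      (∀ e, 0 ≤ c' e) ∧
      (∀ e ∉ F, c' e = c e) ∧
      ((F.filter fun e => c' e ≠ 0).card : ℝ)
        ≤ (8 * Real.log (Fintype.card V) / ε^2)
            * (1 + ∑ e ∈ F, c e * (incv (a e) (b e) ⬝ᵥ Lp.mulVec (incv (a e) (b e)))) ∧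
      lapM a b c' - lapM a b c ≤ ε • lapM a b c ∧
      lapM a b c - lapM a b c' ≤ ε • lapM a b c := by
  have : Nonempty V := Fintype.card_pos_iff.1 (by omega)
  set L := lapM a b c with hLdef
  have hL : L.PosSemidef := posSemidef_lapM a b fun e => (hc e).le
  have hLt : Lᵀ = L := by simpa using hL.1.eq
  have hLpt : Lpᵀ = Lp := hLp.transpose_eq hLt
  obtain ⟨K, hK⟩ := PosSemidef.exists_eq_conjTranspose_mul_self hL
  obtain ⟨W, hW⟩ : ∃ W, W = K * Lp := ⟨_, rfl⟩
  have hWt : Wᴴ = Lp * Kᴴ := by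
    rw [hW, conjTranspose_mul, conjTranspose_eq_transpose_of_trivial Lp, hLpt]
  have hWW : Wᴴ * W = Lp := by
    calc Wᴴ * W = Lp * (Kᴴ * K) * Lp := by rw [hWt, hW]; simp only [Matrix.mul_assoc]
      _ = Lp := by rw [← hK, hLp.2.1]
  have hKW : Kᴴ * W = L * Lp := by rw [hW, ← Matrix.mul_assoc, ← hK]
  have hWK : Wᴴ * K = (L * Lp)ᴴ := by
    rw [← hKW, conjTranspose_mul, conjTranspose_conjTranspose]
  have hWLW : W * L * Wᴴ = W * Kᴴ := by
    calc W * L * Wᴴ = K * (Lp * L * Lp) * Kᴴ := by rw [hWt, hW]; simp only [Matrix.mul_assoc]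
      _ = W * Kᴴ := by rw [hLp.2.1, hW]
  have hWKh : (W * Kᴴ).IsHermitian := hWLW ▸ (hL.mul_mul_conjTranspose_same W).1
  have hWK2 : W * Kᴴ * (W * Kᴴ) = W * Kᴴ := by
    calc W * Kᴴ * (W * Kᴴ) = W * (Kᴴ * W) * Kᴴ := by simp only [Matrix.mul_assoc]
      _ = K * (Lp * L * Lp) * Kᴴ := by rw [hKW, hW]; simp only [Matrix.mul_assoc]
      _ = W * Kᴴ := by rw [hLp.2.1, hW]
  have hproj : W * Kᴴ ≤ 1 := by
    have h := mul_self_nonneg_of_isHermitian (isHermitian_one.sub hWKh)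
    rwa [Matrix.mul_sub, Matrix.sub_mul, Matrix.one_mul, Matrix.mul_one, Matrix.sub_mul, hWK2,
      Matrix.one_mul, sub_self, sub_zero, sub_nonneg] at h
  set v : E → V → ℝ := fun e =>
    if e ∈ F then Real.sqrt (c e) • (W *ᵥ incv (a e) (b e)) else 0 with hv
  have hvv : ∀ u : E → ℝ, ∑ e, u e • vecMulVec (v e) (v e) =
      W * lapM a b (fun e => if e ∈ F then u e * c e else 0) * Wᴴ := fun u => by
    rw [mul_lapM_mul_conjTranspose]
    refine Finset.sum_congr rfl fun e _ => ?_
    by_cases he : e ∈ F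
    · simp only [hv, he, if_true, smul_vecMulVec, vecMulVec_smul, smul_smul,
        Real.mul_self_sqrt (hc e).le]
    · simp [hv, he]
  have hvv1 : ∑ e, vecMulVec (v e) (v e) =
      W * lapM a b (fun e => if e ∈ F then c e else 0) * Wᴴ := by
    simpa using hvv 1
  have hlev : ∑ e, v e ⬝ᵥ v e =
      ∑ e ∈ F, c e * (incv (a e) (b e) ⬝ᵥ Lp.mulVec (incv (a e) (b e))) := by
    rw [← Finset.sum_subset (Finset.subset_univ F) fun e _ he => by simp [hv, he]]
    refine Finset.sum_congr rfl fun e he => ?_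
    simp only [hv, he, if_true, smul_dotProduct, dotProduct_smul, smul_eq_mul, ← mul_assoc,
      Real.mul_self_sqrt (hc e).le]
    rw [← hWW, ← mulVec_mulVec, dotProduct_mulVec _ Wᴴ, conjTranspose_eq_transpose_of_trivial,
      vecMul_transpose]
  have hA : ∑ e, vecMulVec (v e) (v e) ≤ (1 : Matrix V V ℝ) := by
    refine le_trans ?_ hproj
    rw [hvv1, ← hWLW, Matrix.le_iff, ← Matrix.sub_mul, ← Matrix.mul_sub, hLdef, lapM_sub]
    refine (posSemidef_lapM a b fun e => ?_).mul_mul_conjTranspose_same W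
    by_cases he : e ∈ F <;> simp [he, (hc e).le]
  set R := 1 + ∑ e ∈ F, c e * (incv (a e) (b e) ⬝ᵥ Lp.mulVec (incv (a e) (b e))) with hR
  have hR1 : 1 ≤ R := by
    rw [hR, ← hlev]
    have := Finset.sum_nonneg fun e (_ : e ∈ Finset.univ) => dotProduct_self_nonneg_real (v e)
    linarith
  set n : ℝ := ((Fintype.card V : ℕ) : ℝ) with hndef
  have hn2 : (2 : ℝ) ≤ n := by rw [hndef]; exact_mod_cast hn
  have hlogn : Real.log 2 ≤ Real.log n := Real.log_le_log (by norm_num) hn2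
  have hlog2 := Real.log_two_gt_d9
  set β := 8 * Real.log n / ε ^ 2 * R with hβ
  have hlog0 : 0 ≤ Real.log n := by linarith
  have hβ0 : 0 ≤ β := by positivity
  have hfloor : 3 * (1 + ∑ e, v e ⬝ᵥ v e) * Real.log (2 * Fintype.card V) ≤ ⌊β⌋₊ * ε ^ 2 := by
    have h1 : (β - 1) * ε ^ 2 ≤ ⌊β⌋₊ * ε ^ 2 := by
      have := Nat.lt_floor_add_one β
      gcongr
      linarith
    have h2 : (β - 1) * ε ^ 2 = 8 * Real.log n * R - ε ^ 2 := by
      rw [hβ]; field_simp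
    have h3 : Real.log (2 * n) ≤ 2 * Real.log n := by
      rw [Real.log_mul two_ne_zero (by linarith)]; linarith
    have h4 : ε ^ 2 ≤ 1 := pow_le_one₀ hε0.le hε1.le
    have h5 : 3 * R * Real.log (2 * n) ≤ 3 * R * (2 * Real.log n) := by gcongr
    rw [hlev, ← hR]
    nlinarith
  obtain ⟨w, hw0, hwc, hw1, hw2⟩ := exists_sparse_weights v hA hε0 hε1 hfloor
  set c' : E → ℝ := fun e => if e ∈ F then w e * c e else c e with hc'
  have hdiff : ∀ u₁ u₂ : E → ℝ,
      W * lapM a b u₁ * Wᴴ - W * lapM a b u₂ * Wᴴ ≤ ε • (1 : Matrix V V ℝ) →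
      lapM a b u₁ - lapM a b u₂ ≤ ε • L := fun u₁ u₂ h => by
    rw [← Matrix.sub_mul, ← Matrix.mul_sub, lapM_sub, Matrix.le_iff] at h
    have h1 := h.conjTranspose_mul_mul_same K
    have e1 : Kᴴ * (W * lapM a b (u₁ - u₂) * Wᴴ) * K = lapM a b (u₁ - u₂) := by
      calc _ = Kᴴ * W * lapM a b (u₁ - u₂) * (Wᴴ * K) := by simp only [Matrix.mul_assoc]
        _ = lapM a b (u₁ - u₂) := by
          rw [hKW, hWK, mul_lapM_mul_conjTranspose]
          simp only [hLdef, IsMPInv.mul_mulVec_incv hc hLp]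
          rfl
    rw [Matrix.mul_sub, Matrix.sub_mul, e1, Matrix.mul_smul, Matrix.smul_mul, Matrix.mul_one,
      ← hK] at h1
    rw [lapM_sub]
    exact h1
  have hsub : c' - c = (fun e => if e ∈ F then w e * c e else 0) -
      fun e => if e ∈ F then c e else 0 := by
    ext e
    by_cases he : e ∈ F <;> simp [hc', he]
  rw [hvv w, hvv1] at hw1 hw2
  refine ⟨c', fun e => ?_, fun e he => if_neg he, ?_, ?_, ?_⟩
  · simp only [hc']
    split_ifs
    exacts [mul_nonneg (hw0 e) (hc e).le, (hc e).le]
  · refine le_trans ?_ (Nat.floor_le hβ0)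
    exact_mod_cast (Finset.card_le_card fun e he => by
      simp only [Finset.mem_filter, hc'] at he ⊢
      exact ⟨Finset.mem_univ _, fun h0 => he.2 (by simp [he.1, h0])⟩).trans hwc
  · rw [hLdef, lapM_sub, hsub, ← lapM_sub]
    exact hdiff _ _ hw1
  · rw [hLdef, lapM_sub, ← neg_sub c' c, hsub, neg_sub, ← lapM_sub]
    exact hdiff _ _ hw2

end Laplacian

/-- **Subset spectral sparsification.**  The edges of `F` can be resampled and
reweighted (keeping all other edges untouched) so that only
`(8 log n / ε²)(1 + ∑_{e∈F} lev_G e)` of them survive while the Laplacian is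
preserved up to a `(1 ± ε)` factor in the Loewner order. -/
theorem subset_spectral_sparsification
    {V E : Type*} [Fintype V] [DecidableEq V] [Fintype E] [DecidableEq E]
    (a b : E → V) (c : E → ℝ) (hc : ∀ e, 0 < c e) (F : Finset E)
    (ε : ℝ) (hε0 : 0 < ε) (hε1 : ε < 1)
    (Lp : Matrix V V ℝ) (hLp : IsMPInv (lapM a b c) Lp) :
    ∃ c' : E → ℝ,
      (∀ e, 0 ≤ c' e) ∧
      (∀ e ∉ F, c' e = c e) ∧
      ((F.filter fun e => c' e ≠ 0).card : ℝ)
        ≤ (8 * Real.log (Fintype.card V) / ε^2)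
            * (1 + ∑ e ∈ F, c e * (incv (a e) (b e) ⬝ᵥ Lp.mulVec (incv (a e) (b e)))) ∧
      (lapM a b c' - (1 - ε) • lapM a b c).PosSemidef ∧
      ((1 + ε) • lapM a b c - lapM a b c').PosSemidef := by
  rcases Nat.lt_or_ge 1 (Fintype.card V) with hn | hn
  swap
  · have : Subsingleton V := Fintype.card_le_one_iff_subsingleton.1 hn
    have hlog : Real.log (Fintype.card V) = 0 := by
      interval_cases h : Fintype.card V <;> simp
    have hinc : ∀ x y : V, incv x y = 0 := fun x y => by
      ext; simp [incv, Subsingleton.elim x y]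
    have hlap : ∀ u : E → ℝ, lapM a b u = 0 := fun u => by simp [lapM, hinc]
    refine ⟨fun e => if e ∈ F then 0 else c e, fun e => ?_, fun e he => if_neg he, ?_, ?_, ?_⟩
    · dsimp only
      split_ifs
      exacts [le_rfl, (hc e).le]
    · rw [hlog, Finset.filter_false_of_mem fun e he => by simp [he]]
      simp
    · simpa [hlap] using PosSemidef.zero
    · simpa [hlap] using PosSemidef.zero
  obtain ⟨c', h0, hF, hcard, h1, h2⟩ := exists_subset_sparsifier hn a b c hc F hε0 hε1 hLp
  refine ⟨c', h0, hF, hcard, ?_, ?_⟩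
  · convert! Matrix.le_iff.1 h2 using 1
    module
  · convert! Matrix.le_iff.1 h1 using 1
    module
end

section
/- (Greedy spanner) Every unweighted graph G on n vertices and any integer k ≥ 1 admits a subgraph H with at most n^{1 + 1/k} + n edges such that for every pair of vertices u,v, d_H(u,v) ≤ (2k - 1) d_G(u,v), where d denotes shortest-path distance. In particular, taking k = ⌈log n⌉ gives a spanner with O(n log n) edges and stretch at most 2 log n + 1. -/
namespace SimpleGraph

variable {V : Type*} {G H : SimpleGraph V}

theorem Walk.exists_eq_append_cons_of_mem_edges {a b : V} (p : G.Walk a b) {e : Sym2 V}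
    (he : e ∈ p.edges) :
    ∃ (x y : V) (h : G.Adj x y) (q : G.Walk a x) (r : G.Walk y b),
      p = q.append (.cons h r) ∧ s(x, y) = e := by
  induction p with
  | nil => simp at he
  | cons h p ih =>
    rw [Walk.edges_cons, List.mem_cons] at he
    rcases he with rfl | he
    · exact ⟨_, _, h, .nil, p, rfl, rfl⟩
    · obtain ⟨x, y, hxy, q, r, rfl, rfl⟩ := ih he
      exact ⟨x, y, hxy, .cons h q, r, rfl, rfl⟩

/-- Adding an edge that creates a short cycle can only join two vertices that were already close. -/
theorem exists_walk_length_lt_of_egirth_sup_edge_lt {u v : V} {g : ℕ}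
    (hH : (g : ℕ∞) < H.egirth) (hsup : (H ⊔ edge u v).egirth ≤ g) :
    ∃ p : H.Walk u v, p.length < g := by
  have hcyc : ¬ (H ⊔ edge u v).IsAcyclic := by
    rw [← egirth_eq_top]
    exact ne_top_of_le_ne_top (ENat.natCast_ne_top g) hsup
  obtain ⟨a, c, hc, hlen⟩ := exists_egirth_eq_length.mpr hcyc
  rw [hlen, Nat.cast_le] at hsup
  have hmem {x y : V} (w : (H ⊔ edge u v).Walk x y) (hw : s(u, v) ∉ w.edges) :
      ∀ e ∈ w.edges, e ∈ H.edgeSet := by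
    intro e he
    have h := w.edges_subset_edgeSet he
    induction e with
    | _ x y =>
      rw [mem_edgeSet, sup_adj, edge_adj] at h
      rcases h with h | ⟨h, -⟩
      · exact h
      · exact absurd ((Sym2.eq_iff.mpr h) ▸ he) (by grind)
  by_cases huv : s(u, v) ∈ c.edges
  · obtain ⟨x, y, h, q, r, rfl, hxy⟩ := c.exists_eq_append_cons_of_mem_edges huv
    have hnodup := hc.isTrail.edges_nodup
    rw [Walk.edges_append, Walk.edges_cons, hxy, List.nodup_middle, List.nodup_cons] at hnodup
    rw [Walk.length_append, Walk.length_cons] at hsup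
    have hq : s(u, v) ∉ q.edges := by grind
    have hr : s(u, v) ∉ r.edges := by grind
    let w := (r.transfer H (hmem r hr)).append (q.transfer H (hmem q hq))
    have hw : w.length < g := by simp [w]; omega
    rcases Sym2.eq_iff.mp hxy with ⟨rfl, rfl⟩ | ⟨rfl, rfl⟩
    · exact ⟨w.reverse, by simpa using hw⟩
    · exact ⟨w, hw⟩
  · have h := egirth_le_length (hc.transfer (hmem c huv))
    rw [Walk.length_transfer] at h
    exact absurd (hH.trans_le h) (by simpa using hsup)

theorem exists_maximal_le_egirth_gt [Finite V] (G : SimpleGraph V) (g : ℕ) :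
    ∃ H ≤ G, (g : ℕ∞) < H.egirth ∧
      ∀ ⦃u v⦄, G.Adj u v → H.Adj u v ∨ ∃ p : H.Walk u v, p.length < g := by
  obtain ⟨H, hH⟩ := (Set.toFinite {H | H ≤ G ∧ (g : ℕ∞) < H.egirth}).exists_maximal
    ⟨⊥, bot_le, by simp⟩
  refine ⟨H, hH.prop.1, hH.prop.2, fun u v huv ↦ ?_⟩
  by_cases hsup : (g : ℕ∞) < (H ⊔ edge u v).egirth
  · have hle : H ⊔ edge u v ≤ H :=
      hH.le_of_ge ⟨sup_le hH.prop.1 (by simpa [edge_le_iff] using Or.inr huv), hsup⟩ le_sup_left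
    exact .inl (hle (by simp [edge_adj, huv.ne]))
  · exact .inr (exists_walk_length_lt_of_egirth_sup_edge_lt hH.prop.2 (not_lt.mp hsup))

theorem exists_walk_length_le_mul {t : ℕ}
    (h : ∀ ⦃u v⦄, G.Adj u v → ∃ p : H.Walk u v, p.length ≤ t) {u v : V} (p : G.Walk u v) :
    ∃ q : H.Walk u v, q.length ≤ t * p.length := by
  induction p with
  | nil => exact ⟨.nil, by simp⟩
  | cons huv p ih =>
    obtain ⟨q, hq⟩ := ih
    obtain ⟨r, hr⟩ := h huv
    exact ⟨r.append q, by rw [Walk.length_append, Walk.length_cons]; linarith⟩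

/-- In a graph of large girth, a vertex has at most one neighbor that is not farther than itself
from a given root. -/
theorem eq_of_adj_of_edist_le {i : ℕ} (hG : ((2 * i + 2 : ℕ) : ℕ∞) < G.egirth) {v x w w' : V}
    (hx : i ≤ G.edist v x) (hxw : G.Adj w x) (hxw' : G.Adj w' x)
    (hw : G.edist v w ≤ i) (hw' : G.edist v w' ≤ i) : w = w' := by
  classical
  have hpath {z : V} (hzx : G.Adj z x) (hz : G.edist v z ≤ i) :
      ∃ p : G.Walk v z, (p.concat hzx).IsPath ∧ p.length ≤ i := by
    obtain ⟨p, hp⟩ := exists_walk_of_edist_ne_top (ne_top_of_le_ne_top (ENat.natCast_ne_top i) hz)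
    rw [← hp, Nat.cast_le] at hz
    refine ⟨p.bypass, p.bypass_isPath.concat (fun hmem ↦ ?_) hzx,
      p.length_bypass_le_length.trans hz⟩
    have hlt := p.bypass.length_takeUntil_lt_length hmem hzx.ne'
    have hge := hx.trans (edist_le (p.bypass.takeUntil x hmem))
    rw [Nat.cast_le] at hge
    have := p.length_bypass_le_length
    omega
  obtain ⟨p, hp, hpi⟩ := hpath hxw hw
  obtain ⟨q, hq, hqi⟩ := hpath hxw' hw'
  by_contra hne
  have hpq : p.concat hxw ≠ q.concat hxw' := fun h ↦ hne <| by
    simpa using congrArg Walk.penultimate h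
  obtain ⟨z, -, -, c, hc, hlen⟩ := hp.exists_isCycle_length_le_add_of_ne hq hpq
  have := hG.trans_le (egirth_le_length hc)
  rw [Nat.cast_lt] at this
  rw [Walk.length_concat, Walk.length_concat] at hlen
  omega

theorem pow_le_card_of_egirth [Fintype V] [DecidableRel G.Adj] [Nonempty V] {d k : ℕ}
    (hG : ((2 * k : ℕ) : ℕ∞) < G.egirth) (hd : ∀ v, d + 1 ≤ G.degree v) :
    d ^ k ≤ Fintype.card V := by
  classical
  obtain ⟨v⟩ := ‹Nonempty V›
  let S (i : ℕ) : Finset V := {x | G.edist v x = i}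
  have hstep (i : ℕ) (hi : i < k) : (S i).card * d ≤ (S (i + 1)).card := by
    have hGi : ((2 * i + 2 : ℕ) : ℕ∞) < G.egirth :=
      lt_of_le_of_lt (Nat.cast_le.mpr (by omega)) hG
    rw [← mul_one (S (i + 1)).card]
    refine Finset.card_mul_le_card_mul G.Adj (fun x hx ↦ ?_) fun y hy ↦ ?_
    · have hx : G.edist v x = i := by simpa [S] using hx
      have hclose : ({w ∈ G.neighborFinset x | G.edist v w ≤ i} : Finset V).card ≤ 1 := by
        refine Finset.card_le_one.mpr fun w hw w' hw' ↦ ?_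
        simp only [Finset.mem_filter, mem_neighborFinset] at hw hw'
        exact eq_of_adj_of_edist_le hGi hx.ge hw.1.symm hw'.1.symm hw.2 hw'.2
      have hsub : ({w ∈ G.neighborFinset x | ¬ G.edist v w ≤ i} : Finset V) ⊆
          (S (i + 1)).bipartiteAbove G.Adj x := by
        intro w hw
        simp only [Finset.mem_filter, mem_neighborFinset, not_le] at hw
        simp only [Finset.mem_bipartiteAbove, S, Finset.mem_filter, Finset.mem_univ, true_and]
        refine ⟨le_antisymm ?_ ?_, hw.1⟩
        · have := G.edist_triangle (u := v) (v := x) (w := w)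
          rw [hx, edist_eq_one_iff_adj.mpr hw.1] at this
          exact_mod_cast this
        · exact_mod_cast Order.add_one_le_of_lt hw.2
      have hsum := Finset.card_filter_add_card_filter_not (s := G.neighborFinset x)
        (fun w ↦ G.edist v w ≤ i)
      rw [card_neighborFinset_eq_degree] at hsum
      have := hd x
      have := Finset.card_le_card hsub
      omega
    · refine Finset.card_le_one.mpr fun w hw w' hw' ↦ ?_
      simp only [Finset.mem_bipartiteBelow, S, Finset.mem_filter, Finset.mem_univ,
        true_and] at hw hw' hy
      exact eq_of_adj_of_edist_le hGi (hy ▸ by simp) hw.2 hw'.2 hw.1.le hw'.1.le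
  have hpow (i : ℕ) (hi : i ≤ k) : d ^ i ≤ (S i).card := by
    induction i with
    | zero => simpa using Finset.card_pos.mpr ⟨v, by simp [S]⟩
    | succ i ih =>
      exact (Nat.mul_le_mul_right d (ih (by omega))).trans (hstep i (by omega))
  exact (hpow k le_rfl).trans (Finset.card_le_univ _)

/-- If every nonempty vertex set contains a vertex with at most `c` neighbors in the set, then there
are at most `c` edges per vertex. -/
theorem sum_card_filter_adj_le [DecidableEq V] [DecidableRel G.Adj] {c : ℝ}
    (h : ∀ A : Finset V, A.Nonempty → ∃ x ∈ A, (({y ∈ A | G.Adj x y} : Finset V).card : ℝ) ≤ c)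
    (A : Finset V) :
    ∑ x ∈ A, (({y ∈ A | G.Adj x y} : Finset V).card : ℝ) ≤ 2 * (c * A.card) := by
  induction A using Finset.strongInduction with
  | H A ih =>
    rcases A.eq_empty_or_nonempty with rfl | hA
    · simp
    obtain ⟨x, hx, hxc⟩ := h A hA
    obtain ⟨B, hxB, rfl⟩ : ∃ B, x ∉ B ∧ insert x B = A :=
      ⟨A.erase x, A.notMem_erase x, Finset.insert_erase hx⟩
    have hB := ih B (Finset.ssubset_insert hxB)
    have hcard (z : V) : (({y ∈ insert x B | G.Adj z y} : Finset V).card : ℝ) =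
        (if G.Adj z x then 1 else 0) + (({y ∈ B | G.Adj z y} : Finset V).card : ℝ) := by
      simp only [← Finset.sum_boole]
      rw [Finset.sum_insert hxB]
    have hsum : ∑ z ∈ B, (if G.Adj z x then (1 : ℝ) else 0) =
        (({y ∈ B | G.Adj x y} : Finset V).card : ℝ) := by
      rw [← Finset.sum_boole]
      simp only [G.adj_comm]
    rw [hcard] at hxc
    rw [Finset.sum_insert hxB]
    simp only [hcard]
    rw [Finset.sum_add_distrib, hsum, Finset.card_insert_of_notMem hxB]
    simp only [G.irrefl, if_false] at hxc ⊢
    push_cast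
    linarith

/-- The Moore bound: a graph on `n` vertices with girth greater than `2 * k` has at most
`n ^ (1 + 1 / k) + n` edges. -/
theorem ncard_edgeSet_le_of_egirth [Fintype V] {k : ℕ} (hk : k ≠ 0)
    (hG : ((2 * k : ℕ) : ℕ∞) < G.egirth) :
    (G.edgeSet.ncard : ℝ) ≤
      (Fintype.card V : ℝ) ^ ((1 : ℝ) + 1 / (k : ℝ)) + (Fintype.card V : ℝ) := by
  classical
  set n : ℝ := (Fintype.card V : ℝ) with hn
  have hn0 : 0 ≤ n := Nat.cast_nonneg _
  have hdeg (A : Finset V) (hA : A.Nonempty) :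
      ∃ x ∈ A, (({y ∈ A | G.Adj x y} : Finset V).card : ℝ) ≤ n ^ (1 / (k : ℝ)) + 1 := by
    by_contra! hlarge
    set d := ⌊n ^ (1 / (k : ℝ))⌋₊ + 1 with hd
    have : Nonempty (A : Set V) := hA.to_subtype
    have hA' : ((2 * k : ℕ) : ℕ∞) < (G.induce (A : Set V)).egirth :=
      hG.trans_le (IsContained.egirth_le ⟨Copy.induce G A⟩)
    have hpow : d ^ k ≤ Fintype.card (A : Set V) := by
      refine pow_le_card_of_egirth hA' fun x ↦ ?_
      have hx := hlarge x x.2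
      have hcard : ({y ∈ A | G.Adj x y} : Finset V).card = (G.induce (A : Set V)).degree x := by
        rw [← card_neighborFinset_eq_degree,
          ← Finset.card_map (Function.Embedding.subtype (· ∈ (A : Set V)))]
        congr 1
        ext y
        simp [and_comm]
      rw [hcard] at hx
      have hfloor := Nat.floor_le (Real.rpow_nonneg hn0 (1 / (k : ℝ)))
      have hlt : ((d : ℕ) : ℝ) < ((G.induce (A : Set V)).degree x : ℝ) := by
        rw [hd]
        push_cast
        linarith
      exact_mod_cast hlt
    have hlt : n < (d : ℝ) ^ k := by
      have hr := Nat.lt_floor_add_one (n ^ (1 / (k : ℝ)))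
      calc n = (n ^ (1 / (k : ℝ))) ^ k := by
            rw [one_div, Real.rpow_inv_natCast_pow hn0 hk]
        _ < (d : ℝ) ^ k := by
            rw [hd]
            push_cast
            exact pow_lt_pow_left₀ hr (by positivity) hk
    have hle : (d : ℝ) ^ k ≤ n := by
      rw [hn]
      exact_mod_cast hpow.trans (Fintype.card_subtype_le _)
    exact hlt.not_ge hle
  have hsum := sum_card_filter_adj_le hdeg Finset.univ
  have hhand : ∑ x, (({y | G.Adj x y} : Finset V).card : ℝ) = 2 * G.edgeSet.ncard := by
    have := G.sum_degrees_eq_twice_card_edges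
    rw [← coe_edgeFinset, Set.ncard_coe_finset]
    rw [← Nat.cast_sum]
    exact_mod_cast (by simpa [← card_neighborFinset_eq_degree, neighborFinset_eq_filter] using this)
  rw [hhand, Finset.card_univ, ← hn] at hsum
  rw [Real.rpow_one_add' hn0 (by positivity)]
  linarith

end SimpleGraph


/-- **Greedy spanner.**  Every unweighted graph on `n` vertices has, for every
`k ≥ 1`, a spanning subgraph with at most `n^{1+1/k} + n` edges that preserves
reachability and distorts distances by a factor of at most `2k - 1`. -/
theorem greedy_spanner
    {V : Type*} [Fintype V] (G : SimpleGraph V) (k : ℕ) (hk : 1 ≤ k) :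
    ∃ H : SimpleGraph V, H ≤ G ∧
      ((H.edgeSet.ncard : ℝ)
        ≤ (Fintype.card V : ℝ) ^ ((1 : ℝ) + 1 / (k : ℝ)) + (Fintype.card V : ℝ)) ∧
      ∀ u v : V, (G.Reachable u v → H.Reachable u v) ∧
        H.dist u v ≤ (2 * k - 1) * G.dist u v := by
  obtain ⟨H, hHG, hgirth, hH⟩ := G.exists_maximal_le_egirth_gt (2 * k)
  have hadj ⦃u v : V⦄ (huv : G.Adj u v) : ∃ p : H.Walk u v, p.length ≤ 2 * k - 1 := by
    rcases hH huv with h | ⟨p, hp⟩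
    · exact ⟨h.toWalk, by simp; omega⟩
    · exact ⟨p, by omega⟩
  refine ⟨H, hHG, H.ncard_edgeSet_le_of_egirth (by omega) hgirth, fun u v ↦ ⟨?_, ?_⟩⟩
  · rintro ⟨p⟩
    exact (SimpleGraph.exists_walk_length_le_mul hadj p).choose.reachable
  · by_cases huv : G.Reachable u v
    · obtain ⟨p, hp⟩ := huv.exists_walk_length_eq_dist
      obtain ⟨q, hq⟩ := SimpleGraph.exists_walk_length_le_mul hadj p
      exact hp ▸ (SimpleGraph.dist_le q).trans hq
    · rw [SimpleGraph.dist_eq_zero_of_not_reachable fun h ↦ huv (h.mono hHG)]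
      exact Nat.zero_le _
end
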